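/- Let Δ ≥ 7 be an integer. Every finite simple graph G with maximum average degree Mad(G) < 3 and maximum degree at most Δ satisfies χ'_s(G) ≤ 3Δ. -/

import Mathlib

open scoped Classical

namespace StrongEC

/-- Two edges of `G` conflict for strong edge-coloring: they are distinct and either share
an endpoint or are both adjacent to a common edge of `G`. -/
def Conflict {V : Type*} (G : SimpleGraph V) (e e' : Sym2 V) : Prop :=
  e ≠ e' ∧ ((∃ v, v ∈ e ∧ v ∈ e') ∨
    ∃ f ∈ G.edgeSet, (∃ v, v ∈ e ∧ v ∈ f) ∧ (∃ w, w ∈ e' ∧ w ∈ f))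

/-- `C` is a strong edge-coloring of `G` with `k` colors. -/
def IsStrongColoring {V : Type*} (G : SimpleGraph V) {k : ℕ} (C : Sym2 V → Fin k) : Prop :=
  ∀ e ∈ G.edgeSet, ∀ e' ∈ G.edgeSet, Conflict G e e' → C e ≠ C e'

/-- `G` admits a strong `k`-edge-coloring. -/
def HasStrongColoring {V : Type*} (G : SimpleGraph V) (k : ℕ) : Prop :=
  ∃ C : Sym2 V → Fin k, IsStrongColoring G C

/-- The strong chromatic index of `G`: the least `k` such that `G` admits a strong
`k`-edge-coloring. -/
noncomputable def strongChromaticIndex {V : Type*} (G : SimpleGraph V) : ℕ :=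
  sInf {k | HasStrongColoring G k}

/-- The maximum average degree of a finite graph `G`: the supremum over nonempty vertex
subsets `A` of `2 * e(A) / |A|`, where `e(A)` is the number of edges of `G` inside `A`
(this equals the maximum of `2|E(H)|/|V(H)|` over all subgraphs `H` with at least one
vertex). -/
noncomputable def mad {V : Type*} (G : SimpleGraph V) : ℝ :=
  sSup {x : ℝ | ∃ A : Finset V, A.Nonempty ∧
    x = 2 * ({e ∈ G.edgeSet | ∀ v ∈ e, v ∈ A}.ncard : ℝ) / (A.card : ℝ)}

/-!
Extend `G` by pendant edges until every degree is `N = Δ`. A strong edge-coloring of the extended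
graph amounts to a labelling of the vertices by `N`-sets of colors in which adjacent labels share
exactly one color and the neighbors of a vertex `v` see pairwise disjoint parts of the label of
`v`. In a labelling the pendant colors of a vertex are free, so they can be exchanged, and a deleted
vertex of degree `2` can be put back as soon as its two neighbors have suitable free colors.

In a minimal graph without a labelling these exchanges must fail everywhere. For vertices with few
neighbors of degree other than `2` (*poor* vertices) this forces the other ends of their links
through `2`-vertices to have degree `N`; for vertices of degree `3` with a single neighbor of
degree `2` (*tiny* vertices) it forces a neighbor which is *rich*, that is, which has charge to
spare. The crucial case is a tiny vertex next to a *hub*, a vertex of degree `N` nearly all of whose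
neighbors are links to poor vertices: all the colors around it are then determined, and recoloring
at the hub still produces a labelling.

Now give every vertex twice its degree as charge and let the other vertices feed the `2`-vertices
and the tiny vertices. Every vertex that meets an edge keeps at least `6` units, so the average
degree is at least `3`.
-/

section Labelling

variable {V κ : Type*} {N : ℕ} {K L : SimpleGraph V} {C C' C'' : V → Finset κ}

/-- The graph obtained from `K` by deleting all edges that meet `D`. It stands for the
vertex-deleted graph `K - D`, but keeps the vertex type. -/
def isolate (K : SimpleGraph V) (D : Set V) : SimpleGraph V where
  Adj x y := K.Adj x y ∧ x ∉ D ∧ y ∉ D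
  symm := ⟨fun _ _ h => ⟨h.1.symm, h.2.2, h.2.1⟩⟩
  loopless := ⟨fun _ h => K.loopless.irrefl _ h.1⟩

@[simp]
lemma isolate_adj {D : Set V} {x y : V} :
    (isolate K D).Adj x y ↔ K.Adj x y ∧ x ∉ D ∧ y ∉ D := Iff.rfl

lemma isolate_le (K : SimpleGraph V) (D : Set V) : isolate K D ≤ K := fun _ _ h => h.1

lemma isolate_mono {D E : Set V} (hL : L ≤ K) (h : D ⊆ E) : isolate L E ≤ isolate K D :=
  fun _ _ hxy => ⟨hL hxy.1, fun hx => hxy.2.1 (h hx), fun hy => hxy.2.2 (h hy)⟩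

@[simp]
lemma isolate_empty (K : SimpleGraph V) : isolate K ∅ = K := by ext; simp

lemma isolate_insert (K : SimpleGraph V) (u : V) (D : Set V) :
    isolate K (insert u D) = isolate (isolate K D) {u} := by
  ext; simp; tauto

/-- A labelling of the vertices of `K` by sets of `N` colors encodes a strong edge-coloring of
the graph obtained from `K` by adding pendant edges until every degree is `N`: the label of `v`
is the set of colors of the edges at `v`, and the color of an edge `xy` of `K` is the unique
common element of the labels of `x` and `y`. -/
structure IsLabelling (K : SimpleGraph V) (N : ℕ) (C : V → Finset κ) : Prop where
  card_eq : ∀ v, (C v).card = N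
  existsUnique : ∀ ⦃x y⦄, K.Adj x y → ∃! c, c ∈ C x ∧ c ∈ C y
  notMem : ∀ ⦃v x y⦄, K.Adj v x → K.Adj v y → x ≠ y → ∀ ⦃c⦄, c ∈ C v → c ∈ C x → c ∉ C y

/-- In the labelling `C`, the color `c` belongs to `v` but to no edge of `K` at `v`; in other
words, it is the color of a pendant edge at `v`. -/
def IsFree (K : SimpleGraph V) (C : V → Finset κ) (v : V) (c : κ) : Prop :=
  c ∈ C v ∧ ∀ s, K.Adj v s → c ∉ C s

/-- In the labelling `C`, the color `c` is the color of an edge of `K` at `v`. -/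
def IsUsed (K : SimpleGraph V) (C : V → Finset κ) (v : V) (c : κ) : Prop :=
  c ∈ C v ∧ ∃ s, K.Adj v s ∧ c ∈ C s

/-- The labellings `C` and `C'` give the same color to every edge of `K`. -/
def SameEdgeColors (K : SimpleGraph V) (C C' : V → Finset κ) : Prop :=
  ∀ ⦃x y⦄, K.Adj x y → ∀ c, c ∈ C x ∧ c ∈ C y ↔ c ∈ C' x ∧ c ∈ C' y

lemma SameEdgeColors.refl (K : SimpleGraph V) (C : V → Finset κ) : SameEdgeColors K C C :=
  fun _ _ _ _ => Iff.rfl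

lemma SameEdgeColors.trans (h : SameEdgeColors K C C') (h' : SameEdgeColors K C' C'') :
    SameEdgeColors K C C'' :=
  fun _ _ hxy c => (h hxy c).trans (h' hxy c)

lemma SameEdgeColors.mono (h : SameEdgeColors K C C') (hL : L ≤ K) : SameEdgeColors L C C' :=
  fun _ _ hxy => h (hL hxy)

lemma SameEdgeColors.isUsed_iff (h : SameEdgeColors K C C') {v : V} {c : κ} :
    IsUsed K C v c ↔ IsUsed K C' v c := by
  unfold IsUsed SameEdgeColors at *
  grind

lemma IsUsed.mono {v : V} {c : κ} (hc : IsUsed L C v c) (hL : L ≤ K) : IsUsed K C v c :=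
  ⟨hc.1, hc.2.imp fun _ hs => ⟨hL hs.1, hs.2⟩⟩

lemma IsFree.mono {v : V} {c : κ} (hc : IsFree K C v c) (hL : L ≤ K) : IsFree L C v c :=
  ⟨hc.1, fun s hs => hc.2 s (hL hs)⟩

lemma not_isUsed_iff_isFree {v : V} {c : κ} (hc : c ∈ C v) :
    ¬IsUsed K C v c ↔ IsFree K C v c := by
  simp [IsUsed, IsFree, hc]

lemma SameEdgeColors.isFree (h : SameEdgeColors K C C') {v : V} {c : κ} (hc : IsFree K C v c)
    (hcv : c ∈ C' v) : IsFree K C' v c := by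
  rw [← not_isUsed_iff_isFree hcv, ← h.isUsed_iff, not_isUsed_iff_isFree hc.1]
  exact hc

lemma SameEdgeColors.of_isolate {u : V} (h : SameEdgeColors (isolate K {u}) C C')
    (hu : ∀ t, K.Adj u t → ∀ c, c ∈ C u ∧ c ∈ C t ↔ c ∈ C' u ∧ c ∈ C' t) :
    SameEdgeColors K C C' := by
  intro x y hxy c
  obtain rfl | hx := eq_or_ne x u
  · exact hu y hxy c
  · obtain rfl | hy := eq_or_ne y u
    · rw [and_comm, hu x hxy.symm, and_comm]
    · exact h ⟨hxy, hx, hy⟩ c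

namespace IsLabelling

lemma exists_common (h : IsLabelling K N C) {x y : V} (hxy : K.Adj x y) :
    ∃ c, c ∈ C x ∧ c ∈ C y :=
  (h.existsUnique hxy).exists

lemma eq_of_common (h : IsLabelling K N C) {x y : V} (hxy : K.Adj x y) {c c' : κ}
    (hcx : c ∈ C x) (hcy : c ∈ C y) (hcx' : c' ∈ C x) (hcy' : c' ∈ C y) : c = c' :=
  (h.existsUnique hxy).unique ⟨hcx, hcy⟩ ⟨hcx', hcy'⟩

lemma mono (h : IsLabelling K N C) (hL : L ≤ K) : IsLabelling L N C where
  card_eq := h.card_eq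
  existsUnique _ _ hxy := h.existsUnique (hL hxy)
  notMem _ _ _ hvx hvy := h.notMem (hL hvx) (hL hvy)

lemma of_sameEdgeColors (h : IsLabelling K N C) (hcard : ∀ v, (C' v).card = N)
    (hs : SameEdgeColors K C C') : IsLabelling K N C' where
  card_eq := hcard
  existsUnique _ _ hxy := by simpa only [hs hxy] using h.existsUnique hxy
  notMem _ _ _ hvx hvy hne c hv hx hy :=
    h.notMem hvx hvy hne ((hs hvx c).2 ⟨hv, hx⟩).1 ((hs hvx c).2 ⟨hv, hx⟩).2
      ((hs hvy c).2 ⟨hv, hy⟩).2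

lemma extend {u : V} {T : Finset κ} {γ : V → κ} (h : IsLabelling (isolate K {u}) N C)
    (hT : T.card = N) (hγT : ∀ s, K.Adj u s → ∀ c, c ∈ T ∧ c ∈ C s ↔ c = γ s)
    (hfree : ∀ s, K.Adj u s → IsFree (isolate K {u}) C s (γ s))
    (hγ : ∀ s t, K.Adj u s → K.Adj u t → s ≠ t → γ s ∉ C t) :
    IsLabelling K N (Function.update C u T) where
  card_eq v := by
    obtain rfl | hv := eq_or_ne v u
    · simpa using hT
    · simpa [hv] using h.card_eq v
  existsUnique x y hxy := by
    obtain rfl | hx := eq_or_ne x u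
    · simp [hxy.ne', hγT y hxy]
    obtain rfl | hy := eq_or_ne y u
    · simp [hx, and_comm, hγT x hxy.symm]
    · simpa [hx, hy] using h.existsUnique (x := x) (y := y) ⟨hxy, hx, hy⟩
  notMem v x y hvx hvy hxy c hcv hcx hcy := by
    have hpath (s t) (hus : K.Adj u s) (hst : K.Adj s t) (htu : t ≠ u) (hcT : c ∈ T)
        (hcs : c ∈ C s) : c ∉ C t := by
      obtain rfl := (hγT s hus c).1 ⟨hcT, hcs⟩
      exact (hfree s hus).2 t ⟨hst, hus.ne', htu⟩
    by_cases hvu : v = u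
    · grind [hvx.ne, hvy.ne, Function.update_self, Function.update_of_ne]
    by_cases hxu : x = u
    · grind [hvx.symm, Function.update_self, Function.update_of_ne]
    by_cases hyu : y = u
    · grind [hvy.symm, Function.update_self, Function.update_of_ne]
    simp only [Function.update_of_ne, ne_eq, hvu, hxu, hyu, not_false_eq_true] at hcv hcx hcy
    exact h.notMem (v := v) (x := x) (y := y) ⟨hvx, hvu, hxu⟩ ⟨hvy, hvu, hyu⟩ hxy hcv hcx hcy

lemma isFree_isolate (h : IsLabelling K N C) {v y : V} {e : κ} (hvy : K.Adj v y)
    (hev : e ∈ C v) (hey : e ∈ C y) : IsFree (isolate K {y}) C v e :=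
  ⟨hev, fun _ hs => h.notMem hvy hs.1 (Ne.symm hs.2.2) hev hey⟩

lemma mem_and_mem_iff (h : IsLabelling K N C) {x y : V} {e : κ} (hxy : K.Adj x y)
    (hex : e ∈ C x) (hey : e ∈ C y) (c : κ) : c ∈ C x ∧ c ∈ C y ↔ c = e :=
  ⟨fun hc => h.eq_of_common hxy hc.1 hc.2 hex hey, by rintro rfl; exact ⟨hex, hey⟩⟩

variable [DecidableEq κ]

lemma card_inter (h : IsLabelling K N C) {x y : V} (hxy : K.Adj x y) :
    (C x ∩ C y).card = 1 := by
  obtain ⟨c, hc, huniq⟩ := h.existsUnique hxy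
  refine Finset.card_eq_one.2 ⟨c, ?_⟩
  ext c'
  grind

lemma exchange (h : IsLabelling K N C) {u : V} {g p : κ} (hg : IsFree K C u g) (hpu : p ∉ C u)
    (hp : ∀ s, K.Adj u s → p ∉ C s) :
    ∃ C', IsLabelling K N C' ∧ SameEdgeColors K C C' ∧ C' u = insert p ((C u).erase g) ∧
      ∀ y, y ≠ u → C' y = C y := by
  have hs : SameEdgeColors K C (Function.update C u (insert p ((C u).erase g))) := by
    intro x y hxy c
    have := hg.2
    by_cases hx : x = u <;> by_cases hy : y = u <;>
      grind [hxy.ne, hxy.symm, Function.update_self, Function.update_of_ne]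
  refine ⟨_, h.of_sameEdgeColors (fun v => ?_) hs, hs, Function.update_self ..,
    fun y hy => Function.update_of_ne hy ..⟩
  obtain rfl | hv := eq_or_ne v u
  · rw [Function.update_self, Finset.card_insert_of_notMem (by grind),
      Finset.card_erase_add_one hg.1, h.card_eq]
  · rw [Function.update_of_ne hv, h.card_eq]

end IsLabelling

end Labelling

section Palette

variable {N : ℕ}

lemma add_card_inter_eq_card_compl_union {A B : Finset (Fin (3 * N))} (hA : A.card = N)
    (hB : B.card = N) : N + (A ∩ B).card = ((A ∪ B)ᶜ).card := by
  have hAB := Finset.card_union_add_card_inter A B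
  have hcompl := Finset.card_add_card_compl (A ∪ B)
  rw [Fintype.card_fin] at hcompl
  omega

lemma le_card_compl_biUnion {V : Type*} {C : V → Finset (Fin (3 * N))} {s : Finset V}
    (hC : ∀ v, (C v).card = N) (hs : s.card ≤ 2) : N ≤ (s.biUnion C)ᶜ.card := by
  have h := Finset.card_add_card_compl (s.biUnion C)
  have h' := Finset.card_biUnion_le_card_mul s C N fun v _ => (hC v).le
  rw [Fintype.card_fin] at h
  nlinarith

namespace IsLabelling

variable {V : Type*} [Fintype V] {K : SimpleGraph V} {C : V → Finset (Fin (3 * N))}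

lemma card_isUsed (h : IsLabelling K N C) (v : V) :
    {c ∈ C v | IsUsed K C v c}.card = K.degree v := by
  have heq : {c ∈ C v | IsUsed K C v c} = (K.neighborFinset v).biUnion (fun s => C v ∩ C s) := by
    ext c
    simp [IsUsed]
    grind
  have hdisj : (K.neighborFinset v : Set V).PairwiseDisjoint fun s => C v ∩ C s := by
    intro s hs t ht hst
    rw [Function.onFun, Finset.disjoint_left]
    grind [h.notMem (v := v) (x := s) (y := t), SimpleGraph.mem_neighborFinset]
  rw [heq, Finset.card_biUnion hdisj, Finset.sum_congr rfl fun s hs =>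
    h.card_inter ((K.mem_neighborFinset v s).1 hs)]
  simp

lemma exists_isFree_notMem (h : IsLabelling K N C) {v : V} {F : Finset (Fin (3 * N))}
    (hF : K.degree v + F.card < N) : ∃ c, IsFree K C v c ∧ c ∉ F := by
  have hlt : ({c ∈ C v | IsUsed K C v c} ∪ F).card < (C v).card := by
    have := Finset.card_union_le {c ∈ C v | IsUsed K C v c} F
    have := h.card_isUsed v
    have := h.card_eq v
    omega
  obtain ⟨c, hc, hc'⟩ := Finset.exists_mem_notMem_of_card_lt_card hlt
  grind [not_isUsed_iff_isFree]

lemma exists_isFree (h : IsLabelling K N C) {v : V} (hv : K.degree v < N) :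
    ∃ c, IsFree K C v c := by
  simpa using h.exists_isFree_notMem (v := v) (F := ∅) (by simpa using hv)

lemma card_union_biUnion_add_card_le (h : IsLabelling K N C) {t : V} {Q : Finset V}
    (hQ : Q ⊆ K.neighborFinset t) : (C t ∪ Q.biUnion C).card + Q.card ≤ N + Q.card * N := by
  induction Q using Finset.induction_on with
  | empty => simp [h.card_eq]
  | insert s Q hs ih =>
    have hts : K.Adj t s := (K.mem_neighborFinset t s).1 (hQ (Finset.mem_insert_self s Q))
    have hinter : 1 ≤ (C s ∩ (C t ∪ Q.biUnion C)).card := by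
      rw [← h.card_inter hts]
      exact Finset.card_le_card fun c => by simp; tauto
    have hunion := Finset.card_union_add_card_inter (C s) (C t ∪ Q.biUnion C)
    have ih := ih fun x hx => hQ (Finset.mem_insert_of_mem hx)
    rw [h.card_eq] at hunion
    rw [Finset.biUnion_insert, Finset.card_insert_of_notMem hs, Finset.union_left_comm, add_mul]
    omega

lemma exists_notMem_of_card_le_two (h : IsLabelling K N C) {t : V} {Q : Finset V}
    (hQ : Q ⊆ K.neighborFinset t) (hQ2 : Q.card ≤ 2) (hN : 2 ≤ N) (e : Fin (3 * N)) :
    ∃ p, p ≠ e ∧ p ∉ C t ∧ ∀ s ∈ Q, p ∉ C s := by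
  have hlt : (insert e (C t ∪ Q.biUnion C)).card < 3 * N := by
    have := h.card_union_biUnion_add_card_le hQ
    refine (Finset.card_insert_le _ _).trans_lt ?_
    interval_cases Q.card <;> omega
  obtain ⟨p, -, hp⟩ := Finset.exists_mem_notMem_of_card_lt_card
    (t := (Finset.univ : Finset (Fin (3 * N)))) (by simpa using hlt)
  exact ⟨p, by grind⟩

lemma exists_extension {u : V} (h : IsLabelling (isolate K {u}) N C) (hu : K.degree u ≤ 2)
    {γ : V → Fin (3 * N)} (hfree : ∀ s, K.Adj u s → IsFree (isolate K {u}) C s (γ s))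
    (hγ : ∀ s t, K.Adj u s → K.Adj u t → s ≠ t → γ s ∉ C t) {P Q : Finset (Fin (3 * N))}
    (hP : ∀ s, K.Adj u s → Disjoint P (C s)) (hQ : ∀ s, K.Adj u s → γ s ∉ Q)
    (hPQ : Disjoint P Q) (hPcard : P.card + K.degree u ≤ N) (hQcard : Q.card ≤ K.degree u) :
    ∃ C', IsLabelling K N C' ∧ (∀ z, z ≠ u → C' z = C z) ∧ (∀ s, K.Adj u s → γ s ∈ C' u) ∧
      P ⊆ C' u ∧ Disjoint Q (C' u) := by
  set nbrs := K.neighborFinset u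
  have hnbrs (s : V) : s ∈ nbrs ↔ K.Adj u s := K.mem_neighborFinset u s
  have hinj : Set.InjOn γ nbrs := fun s hs t ht hst => by
    by_contra hne
    exact hγ s t ((hnbrs s).1 hs) ((hnbrs t).1 ht) hne (hst ▸ (hfree t ((hnbrs t).1 ht)).1)
  obtain ⟨M, hPM, hM, hMcard⟩ : ∃ M, P ⊆ M ∧ M ⊆ (nbrs.biUnion C)ᶜ \ Q ∧
      M.card = N - K.degree u := by
    refine Finset.exists_subsuperset_card_eq ?_ (by omega) ?_
    · grind [Finset.disjoint_left, Finset.mem_compl]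
    · have := le_card_compl_biUnion (s := nbrs) h.card_eq hu
      have := Finset.le_card_sdiff Q (nbrs.biUnion C)ᶜ
      omega
  have hMdisj : Disjoint (nbrs.image γ) M := by
    grind [Finset.disjoint_left, Finset.mem_compl, IsFree]
  have hcard : (nbrs.image γ ∪ M).card = N := by
    rw [Finset.card_union_of_disjoint hMdisj, Finset.card_image_of_injOn hinj, hMcard,
      K.card_neighborFinset_eq_degree]
    omega
  refine ⟨_, h.extend (T := nbrs.image γ ∪ M) (γ := γ) hcard (fun s hs c => ?_) hfree hγ,
    fun z hz => by simp [hz], fun s hs => ?_, ?_, ?_⟩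
  · have := (hfree s hs).1
    grind [Finset.mem_compl]
  all_goals grind [Function.update_self, Finset.disjoint_left]

end IsLabelling

lemma IsLabelling.exists_insertion {V : Type*} [Finite V] {K : SimpleGraph V}
    {C : V → Finset (Fin (3 * N))} {u v w : V} (h : IsLabelling (isolate K {u}) N C) (hN : 2 ≤ N)
    (hnbr : ∀ s, K.Adj u s → s = v ∨ s = w) (hvw : v ≠ w) {p e : Fin (3 * N)}
    (hp : IsFree (isolate K {u}) C v p) (hpw : p ∉ C w)
    (he : K.Adj u w → IsFree (isolate K {u}) C w e ∧ e ∉ C v) :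
    ∃ C', IsLabelling K N C' ∧ (∀ z, z ≠ u → C' z = C z) ∧ (K.Adj u v → p ∈ C' u) ∧
      (K.Adj u w → e ∈ C' u) := by
  have := Fintype.ofFinite V
  have hdeg : K.degree u ≤ 2 := (Finset.card_le_card fun s hs => by
    simpa using hnbr s (by simpa using hs)).trans (Finset.card_le_two (a := v) (b := w))
  set γ : V → Fin (3 * N) := Function.update (fun _ => e) v p
  have hγv : γ v = p := Function.update_self ..
  have hγw : γ w = e := Function.update_of_ne hvw.symm ..
  obtain ⟨C', h', hC', hγC', -⟩ := h.exists_extension (γ := γ) (P := ∅) (Q := ∅) hdeg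
    (fun s hus => by
      obtain rfl | rfl := hnbr s hus
      exacts [hγv ▸ hp, hγw ▸ (he hus).1])
    (fun s s' hus hus' hne => by
      obtain rfl | rfl := hnbr s hus <;> obtain rfl | rfl := hnbr s' hus'
      exacts [absurd rfl hne, hγv ▸ hpw, hγw ▸ (he hus).2, absurd rfl hne])
    (by simp) (by simp) (by simp) (by simp; omega) (by simp)
  exact ⟨C', h', hC', fun huv => hγv ▸ hγC' v huv, fun huw => hγw ▸ hγC' w huw⟩

end Palette

section Light

variable {V : Type*} [Fintype V] {N : ℕ} {H K : SimpleGraph V} {C : V → Finset (Fin (3 * N))}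

/-- The neighbors of `x` of degree `2`. -/
noncomputable def twoNbrs (H : SimpleGraph V) (x : V) : Finset V :=
  {s ∈ H.neighborFinset x | H.degree s = 2}

/-- A vertex of degree `3` with exactly one neighbor of degree `2`. -/
def IsTiny (H : SimpleGraph V) (x : V) : Prop :=
  H.degree x = 3 ∧ (twoNbrs H x).card = 1

/-- The vertices of degree `2` and the tiny vertices: these are flexible enough that any color
not used by an edge can be removed from their label. -/
def IsLight (H : SimpleGraph V) (x : V) : Prop :=
  H.degree x = 2 ∨ IsTiny H x

/-- The vertices whose labels may change when a color is removed from the label of the light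
vertex `t` in a labelling of `K`. -/
def cluster (H K : SimpleGraph V) (t : V) : Set V :=
  {y | y = t ∨ IsTiny H t ∧ K.Adj t y ∧ H.degree y = 2}

lemma mem_twoNbrs {x s : V} : s ∈ twoNbrs H x ↔ H.Adj x s ∧ H.degree s = 2 := by
  simp [twoNbrs]

lemma IsLight.degree_le {x : V} (hx : IsLight H x) : H.degree x ≤ 3 := by
  rcases hx with hx | hx
  · omega
  · exact hx.1.le

lemma IsTiny.exists_twoNbr {t : V} (ht : IsTiny H t) : ∃ u, H.Adj t u ∧ H.degree u = 2 := by
  obtain ⟨u, hu⟩ := Finset.card_pos.1 (ht.2 ▸ Nat.one_pos : 0 < (twoNbrs H t).card)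
  exact ⟨u, mem_twoNbrs.1 hu⟩

lemma degree_le_of_le (hK : K ≤ H) (v : V) : K.degree v ≤ H.degree v :=
  Finset.card_le_card fun s hs => by simpa using hK (by simpa using hs)

lemma degree_lt_of_not_adj (hK : K ≤ H) {v u : V} (hu : H.Adj v u) (hKu : ¬K.Adj v u) :
    K.degree v < H.degree v :=
  Finset.card_lt_card <| Finset.ssubset_iff_of_subset
    (fun s hs => by simpa using hK (by simpa using hs)) |>.2 ⟨u, by simpa, by simpa⟩

namespace IsLabelling

lemma exists_removal_of_degree_le_two (h : IsLabelling K N C) (hN : 2 ≤ N) {t : V}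
    (ht : K.degree t ≤ 2) {p : Fin (3 * N)} (hp : IsFree K C t p) (e : Fin (3 * N)) :
    ∃ C', IsLabelling K N C' ∧ SameEdgeColors K C C' ∧ p ∉ C' t ∧ (∀ y, y ≠ t → C' y = C y) ∧
      (e ∈ C' t → e ∈ C t) := by
  obtain ⟨q, hqe, hqt, hq⟩ := h.exists_notMem_of_card_le_two subset_rfl ht hN e
  obtain ⟨C', h', hs, ht', hy⟩ := h.exchange hp hqt fun s hs => hq s (by simpa using hs)
  have := hp.1
  exact ⟨C', h', hs, by grind, hy, by grind⟩

lemma exists_removal_of_adj (h : IsLabelling K N C) (hN : 2 ≤ N) {t u : V} (htu : K.Adj t u)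
    (ht : K.degree t ≤ 3) (hu : K.degree u ≤ 2) {p : Fin (3 * N)} (hp : IsFree K C t p) :
    ∃ C', IsLabelling K N C' ∧ SameEdgeColors K C C' ∧ p ∉ C' t ∧ (∀ y, p ∈ C' y → p ∈ C y) ∧
      ∀ y, y ≠ t → y ≠ u → C' y = C y := by
  have hother : ∃ e, ∀ s, K.Adj u s → s ≠ t → ∀ c ∈ C u, c ∈ C s → c = e := by
    by_cases hne : ∃ s, K.Adj u s ∧ s ≠ t
    · obtain ⟨w, huw, hwt⟩ := hne
      obtain ⟨e, heu, hew⟩ := h.exists_common huw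
      have hsub : {t, w} ⊆ K.neighborFinset u := by simp [Finset.insert_subset_iff, htu.symm, huw]
      have hpair := Finset.eq_of_subset_of_card_le hsub (by simpa [hwt.symm] using hu)
      refine ⟨e, fun s hus hst c hcu hcs => ?_⟩
      have hs : s ∈ ({t, w} : Finset V) := by simpa [hpair] using hus
      obtain rfl : s = w := by grind
      exact h.eq_of_common huw hcu hcs heu hew
    · exact ⟨p, fun s hus hst => absurd ⟨s, hus, hst⟩ hne⟩
  obtain ⟨e, he⟩ := hother
  obtain ⟨q, hqe, hqt, hq⟩ := h.exists_notMem_of_card_le_two (Finset.erase_subset u _)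
    (Q := (K.neighborFinset t).erase u) (by rw [Finset.card_erase_of_mem (by simpa)]; simp; omega)
    hN e
  obtain ⟨C₁, h₁, hs₁, hq₁, hC₁, hpu⟩ : ∃ C₁, IsLabelling K N C₁ ∧ SameEdgeColors K C C₁ ∧
      q ∉ C₁ u ∧ (∀ y, y ≠ u → C₁ y = C y) ∧ (p ∈ C₁ u → p ∈ C u) := by
    by_cases hqu : q ∈ C u
    · exact h.exists_removal_of_degree_le_two hN hu ⟨hqu, fun s hs hqs => by grind⟩ p
    · exact ⟨C, h, .refl K C, hqu, fun _ _ => rfl, id⟩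
  have htC : C₁ t = C t := hC₁ t htu.ne
  have hp₁ : IsFree K C₁ t p := hs₁.isFree hp (htC ▸ hp.1)
  obtain ⟨C', h', hs', ht', hC'⟩ := h₁.exchange hp₁ (htC ▸ hqt) fun s hts => by
    obtain rfl | hsu := eq_or_ne s u
    · exact hq₁
    · exact hC₁ s hsu ▸ hq s (by simp [hsu, hts])
  refine ⟨C', h', hs₁.trans hs', by grind [hp.1], fun y hy => ?_, by grind⟩
  obtain rfl | hyt := eq_or_ne y t
  · exact hp.1
  · obtain rfl | hyu := eq_or_ne y u <;> grind

lemma exists_removal (h : IsLabelling K N C) (hN : 2 ≤ N) (hK : K ≤ H) {t : V}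
    (ht : IsLight H t) {p : Fin (3 * N)} (hp : IsFree K C t p) :
    ∃ C', IsLabelling K N C' ∧ SameEdgeColors K C C' ∧ p ∉ C' t ∧ (∀ y, p ∈ C' y → p ∈ C y) ∧
      ∀ y, y ∉ cluster H K t → C' y = C y := by
  have hle := degree_le_of_le hK
  by_cases ht2 : K.degree t ≤ 2
  · obtain ⟨C', h', hs, hpt, hC', -⟩ := h.exists_removal_of_degree_le_two hN ht2 hp p
    exact ⟨C', h', hs, hpt, fun y hy => hC' y (by rintro rfl; exact hpt hy) ▸ hy,
      fun y hy => hC' y fun hyt => hy (Or.inl hyt)⟩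
  · have htiny : IsTiny H t := ht.resolve_left fun h2 => ht2 (h2 ▸ hle t)
    obtain ⟨u, htu, hu⟩ := htiny.exists_twoNbr
    have hKtu : K.Adj t u := by
      by_contra hcon
      have := degree_lt_of_not_adj hK htu hcon
      have := htiny.1
      omega
    obtain ⟨C', h', hs, hpt, hp', hC'⟩ := h.exists_removal_of_adj hN hKtu
      (htiny.1 ▸ hle t) (hu ▸ hle u) hp
    exact ⟨C', h', hs, hpt, hp', by grind [cluster]⟩

lemma exists_clearing (h : IsLabelling K N C) (hN : 2 ≤ N) (hK : K ≤ H) {x : V}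
    {p : Fin (3 * N)} (hx : ∀ s, K.Adj x s → p ∈ C s →
      IsLight H s ∧ x ∉ cluster H K s ∧ ¬IsUsed K C s p) :
    ∃ C', IsLabelling K N C' ∧ SameEdgeColors K C C' ∧ C' x = C x ∧ (∀ s, K.Adj x s → p ∉ C' s) ∧
      ∀ y, C' y ≠ C y → ∃ t, K.Adj x t ∧ IsLight H t ∧ p ∈ C t ∧ y ∈ cluster H K t := by
  induction hn : {s ∈ K.neighborFinset x | p ∈ C s}.card using Nat.strong_induction_on
    generalizing C with
  | _ n ih =>
  by_cases hall : ∀ s, K.Adj x s → p ∉ C s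
  · exact ⟨C, h, .refl K C, rfl, hall, fun y hy => absurd rfl hy⟩
  push Not at hall
  obtain ⟨s, hxs, hps⟩ := hall
  obtain ⟨hlight, hxcluster, hused⟩ := hx s hxs hps
  obtain ⟨C₁, h₁, hs₁, hps₁, hp₁, hC₁⟩ :=
    h.exists_removal hN hK hlight ((not_isUsed_iff_isFree hps).1 hused)
  have hlt : {s ∈ K.neighborFinset x | p ∈ C₁ s}.card < n := by
    rw [← hn]
    refine Finset.card_lt_card ((Finset.ssubset_iff_of_subset fun y => ?_).2 ⟨s, ?_, ?_⟩)
    · simpa using fun hxy hpy => ⟨hxy, hp₁ y hpy⟩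
    · simpa using ⟨hxs, hps⟩
    · simp [hps₁]
  obtain ⟨C', h', hs', hx', hp', hC'⟩ := ih _ hlt h₁ (fun s hs hps => by
    rw [← hs₁.isUsed_iff]
    exact hx s hs (hp₁ s hps)) rfl
  refine ⟨C', h', hs₁.trans hs', hx'.trans (hC₁ x hxcluster), hp', fun y hy => ?_⟩
  by_cases hy₁ : C' y = C₁ y
  · exact ⟨s, hxs, hlight, hps, not_imp_comm.1 (hC₁ y) (hy₁ ▸ hy)⟩
  · obtain ⟨t, hxt, ht, hpt, hyt⟩ := hC' y hy₁
    exact ⟨t, hxt, ht, hp₁ t hpt, hyt⟩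

lemma exists_swap (h : IsLabelling K N C) (hN : 2 ≤ N) (hK : K ≤ H) {x : V} {g p : Fin (3 * N)}
    (hg : IsFree K C x g) (hpx : p ∉ C x) (hx : ∀ s, K.Adj x s → p ∈ C s →
      IsLight H s ∧ x ∉ cluster H K s ∧ ¬IsUsed K C s p) :
    ∃ C', IsLabelling K N C' ∧ SameEdgeColors K C C' ∧ C' x = insert p ((C x).erase g) ∧
      ∀ y, y ≠ x → C' y ≠ C y →
        ∃ t, K.Adj x t ∧ IsLight H t ∧ p ∈ C t ∧ y ∈ cluster H K t := by
  obtain ⟨C₁, h₁, hs₁, hx₁, hp₁, hC₁⟩ := h.exists_clearing hN hK hx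
  obtain ⟨C', h', hs', hx', hC'⟩ := h₁.exchange (hs₁.isFree hg (hx₁ ▸ hg.1)) (hx₁ ▸ hpx) hp₁
  exact ⟨C', h', hs₁.trans hs', hx₁ ▸ hx', fun y hyx hy => hC₁ y (hC' y hyx ▸ hy)⟩

end IsLabelling

/-- The color `c` may be moved into the label of `x`, possibly after recoloring light neighbors
of `x`. -/
def IsMovable (H K : SimpleGraph V) (C : V → Finset (Fin (3 * N))) (x : V) (c : Fin (3 * N)) :
    Prop :=
  ∀ s, K.Adj x s → c ∈ C s → IsLight H s ∧ ¬IsUsed K C s c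

lemma IsLight.of_mem_cluster {t y : V} (ht : IsLight H t) (hy : y ∈ cluster H K t) :
    IsLight H y := by
  rcases hy with rfl | ⟨-, -, hy⟩
  · exact ht
  · exact Or.inl hy

lemma IsMovable.of_sameEdgeColors {C' : V → Finset (Fin (3 * N))} {x : V} {c : Fin (3 * N)}
    (hc : IsMovable H K C x c) (hs : SameEdgeColors K C C')
    (hC' : ∀ y, K.Adj x y → C' y ≠ C y → IsLight H y) : IsMovable H K C' x c := by
  intro s hxs hcs
  refine ⟨?_, fun hused => ?_⟩
  · by_cases hsC : C' s = C s
    · exact (hc s hxs (hsC ▸ hcs)).1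
    · exact hC' s hxs hsC
  · have hused' := hs.isUsed_iff.2 hused
    exact (hc s hxs hused'.1).2 hused'

lemma IsLabelling.exists_relabelling (h : IsLabelling K N C) (hN : 2 ≤ N) (hK : K ≤ H) {x : V}
    (hx : H.degree x ≠ 2) {T : Finset (Fin (3 * N))} (hT : T.card = N)
    (hused : ∀ c, IsUsed K C x c → c ∈ T) (hmov : ∀ c ∈ T, IsUsed K C x c ∨ IsMovable H K C x c) :
    ∃ C', IsLabelling K N C' ∧ SameEdgeColors K C C' ∧ C' x = T ∧
      ∀ y, y ≠ x → C' y ≠ C y → ∃ t, K.Adj x t ∧ IsLight H t ∧ y ∈ cluster H K t := by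
  induction hn : (T \ C x).card generalizing C with
  | zero =>
    have hsub : T ⊆ C x := by rwa [Finset.card_eq_zero, Finset.sdiff_eq_empty_iff_subset] at hn
    exact ⟨C, h, .refl K C, (Finset.eq_of_subset_of_card_le hsub (by rw [hT, h.card_eq])).symm,
      fun y _ hy => absurd rfl hy⟩
  | succ n ih =>
    obtain ⟨p, hp⟩ := Finset.card_pos.1 (by omega : 0 < (T \ C x).card)
    obtain ⟨g, hg⟩ := Finset.card_pos.1
      (by rw [Finset.card_sdiff_comm (by rw [h.card_eq, hT])]; omega : 0 < (C x \ T).card)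
    obtain ⟨hpT, hpx⟩ := Finset.mem_sdiff.1 hp
    obtain ⟨hgx, hgT⟩ := Finset.mem_sdiff.1 hg
    have hgfree : IsFree K C x g := (not_isUsed_iff_isFree hgx).1 fun hu => hgT (hused g hu)
    have hpmov := (hmov p hpT).resolve_left fun hu => hpx hu.1
    obtain ⟨C₁, h₁, hs₁, hx₁, hC₁⟩ := h.exists_swap hN hK hgfree hpx fun s hxs hps =>
      ⟨(hpmov s hxs hps).1, by rintro (rfl | ⟨-, -, h2⟩); exacts [hxs.ne rfl, hx h2],
        (hpmov s hxs hps).2⟩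
    have hcard : (T \ C₁ x).card = n := by
      have : T \ C₁ x = (T \ C x).erase p := by grind
      rw [this, Finset.card_erase_of_mem hp, hn, Nat.add_sub_cancel]
    obtain ⟨C', h', hs', hx', hC'⟩ := ih h₁ (fun c hc => hused c (hs₁.isUsed_iff.2 hc))
      (fun c hc => (hmov c hc).imp hs₁.isUsed_iff.1 fun hm => hm.of_sameEdgeColors hs₁
        fun y hxy hy => by
          obtain ⟨t, -, ht, -, hyt⟩ := hC₁ y hxy.ne' hy
          exact ht.of_mem_cluster hyt) hcard
    refine ⟨C', h', hs₁.trans hs', hx', fun y hyx hy => ?_⟩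
    by_cases hy₁ : C' y = C₁ y
    · obtain ⟨t, hxt, ht, -, hyt⟩ := hC₁ y hyx (hy₁ ▸ hy)
      exact ⟨t, hxt, ht, hyt⟩
    · exact hC' y hyx hy₁

end Light

section MinimalCounterexample

variable {V : Type*} [Fintype V] {N : ℕ} {H : SimpleGraph V}

lemma exists_adj_ne_of_degree_eq_two {z : V} (hz : H.degree z = 2) (v : V) :
    ∃ w, H.Adj z w ∧ w ≠ v := by
  obtain ⟨w, hw, hwv⟩ := Finset.exists_mem_ne
    (by rw [H.card_neighborFinset_eq_degree, hz]; norm_num : 1 < (H.neighborFinset z).card) v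
  exact ⟨w, by simpa using hw, hwv⟩

lemma eq_or_eq_of_degree_le_two {z v w s : V} (hz : H.degree z ≤ 2) (hzv : H.Adj z v)
    (hzw : H.Adj z w) (hvw : v ≠ w) (hzs : H.Adj z s) : s = v ∨ s = w := by
  have hsub : {v, w} ⊆ H.neighborFinset z := by simp [Finset.insert_subset_iff, hzv, hzw]
  have hpair := Finset.eq_of_subset_of_card_le hsub (by simpa [hvw] using hz)
  simpa [← hpair] using (H.mem_neighborFinset z s).2 hzs

lemma degree_isolate_lt {u v : V} (huv : H.Adj u v) : (isolate H {u}).degree v < H.degree v :=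
  degree_lt_of_not_adj (isolate_le H {u}) huv.symm (by simp)

/-- A minimal counterexample to the existence of labellings: a graph of maximum degree at most `N`
that has no labelling, although each of its vertex-deleted subgraphs has one. -/
structure IsMinimalCounterexample (N : ℕ) (H : SimpleGraph V) : Prop where
  seven_le : 7 ≤ N
  degree_le : ∀ v, H.degree v ≤ N
  not_isLabelling : ∀ C : V → Finset (Fin (3 * N)), ¬IsLabelling H N C
  exists_isLabelling : ∀ u, 0 < H.degree u →
    ∃ C : V → Finset (Fin (3 * N)), IsLabelling (isolate H {u}) N C

namespace IsMinimalCounterexample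

lemma exists_not_adj (hM : IsMinimalCounterexample N H) {z : V} (hz : 0 < H.degree z)
    (hz2 : H.degree z ≤ 2) : ∃ s t, H.Adj z s ∧ H.Adj z t ∧ s ≠ t ∧ ¬H.Adj s t := by
  by_contra! hclique
  obtain ⟨C, h⟩ := hM.exists_isLabelling z hz
  have hfree (s : V) : ∃ c, H.Adj z s → IsFree (isolate H {z}) C s c := by
    by_cases hzs : H.Adj z s
    · obtain ⟨c, hc⟩ := h.exists_isFree ((degree_isolate_lt hzs).trans_le (hM.degree_le s))
      exact ⟨c, fun _ => hc⟩
    · have := hM.seven_le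
      exact ⟨⟨0, by omega⟩, fun hzs' => absurd hzs' hzs⟩
  choose γ hγ using hfree
  have := hM.seven_le
  obtain ⟨C', h', -⟩ := h.exists_extension hz2 hγ (P := ∅) (Q := ∅)
    (fun s t hzs hzt hst => (hγ s hzs).2 t ⟨hclique s t hzs hzt hst, hzs.ne', hzt.ne'⟩)
    (by simp) (by simp) (by simp) (by simp; omega) (by simp)
  exact hM.not_isLabelling C' h'

lemma two_le_degree (hM : IsMinimalCounterexample N H) {u v : V} (huv : H.Adj u v) :
    2 ≤ H.degree u := by
  by_contra! hlt
  obtain ⟨s, t, hus, hut, hst, -⟩ := hM.exists_not_adj (z := u)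
    ((H.degree_pos_iff_exists_adj u).2 ⟨v, huv⟩) (by omega)
  exact hst (Finset.card_le_one.1 (Nat.le_of_lt_succ hlt) s (by simpa) t (by simpa))

lemma not_adj_of_degree_eq_two (hM : IsMinimalCounterexample N H) {z v w : V}
    (hz : H.degree z = 2) (hzv : H.Adj z v) (hzw : H.Adj z w) : ¬H.Adj v w := by
  intro hvw
  obtain ⟨s, t, hzs, hzt, hst, hnadj⟩ := hM.exists_not_adj (z := z) (by omega) hz.le
  have hs := eq_or_eq_of_degree_le_two hz.le hzv hzw hvw.ne hzs
  have ht := eq_or_eq_of_degree_le_two hz.le hzv hzw hvw.ne hzt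
  grind [hvw.symm]

end IsMinimalCounterexample

end MinimalCounterexample

section Poor

variable {V : Type*} [Fintype V] {N : ℕ} {H K : SimpleGraph V} {C : V → Finset (Fin (3 * N))}

/-- Vertices with few neighbors, at most one of which does not have degree `2`: a deleted
`2`-vertex next to a poor vertex can almost always be put back. -/
def IsPoor (H : SimpleGraph V) (v : V) : Prop :=
  H.degree v = (twoNbrs H v).card ∧ (twoNbrs H v).card ≤ 5 ∨
    H.degree v = (twoNbrs H v).card + 1 ∧ (twoNbrs H v).card ≤ 3

/-- The colors that cannot be moved into the label of `v` by recoloring only neighbors of `v` of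
degree `2`. -/
noncomputable def blockedColors (H K : SimpleGraph V) (C : V → Finset (Fin (3 * N))) (v : V) :
    Finset (Fin (3 * N)) :=
  {c | ∃ s, K.Adj v s ∧ c ∈ C s ∧ (IsUsed K C s c ∨ H.degree s ≠ 2)}

/-- The graph obtained from `K` by deleting the edges that join a vertex of `S` to a vertex of
degree `2` in `H`. -/
def trim (H K : SimpleGraph V) (S : Set V) : SimpleGraph V where
  Adj x y := K.Adj x y ∧ (x ∈ S → H.degree y ≠ 2) ∧ (y ∈ S → H.degree x ≠ 2)
  symm := ⟨fun _ _ h => ⟨h.1.symm, h.2.2, h.2.1⟩⟩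
  loopless := ⟨fun _ h => K.loopless.irrefl _ h.1⟩

lemma trim_le (H K : SimpleGraph V) (S : Set V) : trim H K S ≤ K := fun _ _ h => h.1

lemma card_twoNbrs_add (v : V) : (twoNbrs H v).card +
    ({s ∈ H.neighborFinset v | H.degree s ≠ 2} : Finset V).card = H.degree v :=
  Finset.card_filter_add_card_filter_not _

lemma IsPoor.card_le_one {v : V} (hv : IsPoor H v) :
    ({s ∈ H.neighborFinset v | H.degree s ≠ 2} : Finset V).card ≤ 1 := by
  have := card_twoNbrs_add (H := H) v
  rcases hv with hv | hv <;> omega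

lemma IsPoor.eq_of_adj {v x y : V} (hv : IsPoor H v) (hvx : H.Adj v x) (hvy : H.Adj v y)
    (hx : H.degree x ≠ 2) (hy : H.degree y ≠ 2) : x = y :=
  Finset.card_le_one.1 hv.card_le_one x (by simp [hvx, hx]) y (by simp [hvy, hy])

lemma IsPoor.degree_le {v : V} (hv : IsPoor H v) : H.degree v ≤ 5 := by
  rcases hv with hv | hv <;> omega

lemma notMem_blockedColors {v : V} {p : Fin (3 * N)} : p ∉ blockedColors H K C v ↔
    ∀ s, K.Adj v s → p ∈ C s → ¬IsUsed K C s p ∧ H.degree s = 2 := by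
  simp [blockedColors]

namespace IsLabelling

lemma card_blockedColors_le (h : IsLabelling K N C) (hN : 4 ≤ N) (hK : K ≤ H) {v z : V}
    (hv : IsPoor H v) (hvz : H.Adj v z) (hKvz : ¬K.Adj v z) (hz : H.degree z = 2) :
    (blockedColors H K C v).card ≤ N + 4 := by
  set A : Finset V := {s ∈ K.neighborFinset v | H.degree s = 2}
  set B : Finset V := {s ∈ K.neighborFinset v | H.degree s ≠ 2}
  have hA : A.card < (twoNbrs H v).card :=
    Finset.card_lt_card <| (Finset.ssubset_iff_of_subset fun s hs => by
      simp only [A, Finset.mem_filter, K.mem_neighborFinset] at hs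
      exact mem_twoNbrs.2 ⟨hK hs.1, hs.2⟩).2 ⟨z, mem_twoNbrs.2 ⟨hvz, hz⟩, by simp [A, hKvz]⟩
  have hB : B.card ≤ ({s ∈ H.neighborFinset v | H.degree s ≠ 2} : Finset V).card :=
    Finset.card_le_card fun s hs => by
      simp only [B, Finset.mem_filter, K.mem_neighborFinset, H.mem_neighborFinset] at hs ⊢
      exact ⟨hK hs.1, hs.2⟩
  have hsub : blockedColors H K C v ⊆
      A.biUnion (fun s => {c ∈ C s | IsUsed K C s c}) ∪ B.biUnion C := fun c hc => by
    obtain ⟨s, hvs, hcs, hc⟩ := (Finset.mem_filter.1 hc).2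
    by_cases hs : H.degree s = 2
    · exact Finset.mem_union_left _ (Finset.mem_biUnion.2 ⟨s, by simp [A, hvs, hs],
        by simp [hcs, hc.resolve_right (not_not.2 hs)]⟩)
    · exact Finset.mem_union_right _ (Finset.mem_biUnion.2 ⟨s, by simp [B, hvs, hs], hcs⟩)
  have hcardA : (A.biUnion fun s => {c ∈ C s | IsUsed K C s c}).card ≤ A.card * 2 :=
    Finset.card_biUnion_le_card_mul _ _ _ fun s hs =>
      (h.card_isUsed s).le.trans ((degree_le_of_le hK s).trans (Finset.mem_filter.1 hs).2.le)
  have hcardB : (B.biUnion C).card ≤ B.card * N :=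
    Finset.card_biUnion_le_card_mul _ _ _ fun s _ => (h.card_eq s).le
  have hcard := (Finset.card_le_card hsub).trans (Finset.card_union_le _ _)
  have hsum := card_twoNbrs_add (H := H) v
  rcases hv with hv | hv
  · have : B.card = 0 := by omega
    rw [this] at hcardB
    omega
  · have : B.card * N ≤ 1 * N := Nat.mul_le_mul_right _ (by omega)
    omega

lemma exists_swap_of_notMem_blockedColors (h : IsLabelling K N C) (hN : 2 ≤ N) (hK : K ≤ H)
    {v : V} {g p : Fin (3 * N)} (hg : IsFree K C v g) (hpv : p ∉ C v)
    (hp : p ∉ blockedColors H K C v) :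
    ∃ C', IsLabelling K N C' ∧ SameEdgeColors K C C' ∧ C' v = insert p ((C v).erase g) ∧
      ∀ y, y ≠ v → C' y ≠ C y → K.Adj v y ∧ H.degree y = 2 := by
  have hp := notMem_blockedColors.1 hp
  have hcluster {s y : V} (hs : H.degree s = 2) (hy : y ∈ cluster H K s) : y = s :=
    hy.resolve_right fun hy => by have := hy.1.1; omega
  obtain ⟨C', h', hs, hv, hC'⟩ := h.exists_swap hN hK hg hpv fun s hvs hps =>
    have hs2 := (hp s hvs hps).2
    ⟨Or.inl hs2, fun hvs' => hvs.ne (hcluster hs2 hvs'), (hp s hvs hps).1⟩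
  refine ⟨C', h', hs, hv, fun y hyv hy => ?_⟩
  obtain ⟨t, hvt, -, hpt, hyt⟩ := hC' y hyv hy
  obtain rfl := hcluster (hp t hvt hpt).2 hyt
  exact ⟨hvt, (hp y hvt hpt).2⟩

lemma exists_isFree_of_notMem_blockedColors (h : IsLabelling K N C) (hN : 2 ≤ N) (hK : K ≤ H)
    {v : V} {g p : Fin (3 * N)} (hg : IsFree K C v g) (hp : p ∉ blockedColors H K C v) :
    ∃ C', IsLabelling K N C' ∧ SameEdgeColors K C C' ∧ IsFree K C' v p ∧
      C' v ⊆ insert p (C v) ∧ ∀ y, y ≠ v → C' y ≠ C y → K.Adj v y ∧ H.degree y = 2 := by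
  by_cases hpv : p ∈ C v
  · exact ⟨C, h, .refl K C, ⟨hpv, fun s hvs hps =>
      (notMem_blockedColors.1 hp s hvs hps).1 ⟨hps, v, hvs.symm, hpv⟩⟩,
      Finset.subset_insert _ _, fun y _ hy => absurd rfl hy⟩
  · obtain ⟨C', h', hs, hv, hC'⟩ := h.exists_swap_of_notMem_blockedColors hN hK hg hpv hp
    have hpv' : p ∈ C' v := hv ▸ Finset.mem_insert_self _ _
    refine ⟨C', h', hs, (not_isUsed_iff_isFree hpv').1 ?_,
      hv ▸ Finset.insert_subset_insert _ (Finset.erase_subset _ _), hC'⟩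
    rw [← hs.isUsed_iff]
    exact fun hu => hpv hu.1

end IsLabelling

end Poor

section Reinsertion

variable {V : Type*} [Fintype V] {N : ℕ} {H K : SimpleGraph V} {C : V → Finset (Fin (3 * N))}

lemma exists_notMem_of_card_lt {F : Finset (Fin (3 * N))} (hF : F.card < 3 * N) :
    ∃ p, p ∉ F := by
  obtain ⟨p, -, hp⟩ := Finset.exists_mem_notMem_of_card_lt_card
    (by simpa using hF : F.card < (Finset.univ : Finset (Fin (3 * N))).card)
  exact ⟨p, hp⟩

/-- `z` is a neighbor of `w` of degree `2` whose other neighbor is poor: a link from `w` to a poor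
vertex. -/
def IsPoorLink (H : SimpleGraph V) (w z : V) : Prop :=
  H.Adj w z ∧ H.degree z = 2 ∧ ∃ v, v ≠ w ∧ H.Adj z v ∧ IsPoor H v

namespace IsMinimalCounterexample

/- The edge `vy` of color `e` is deleted, `p` is made free at `v`, and the edge is put back with
color `p`. -/
lemma exists_recoloring_of_adj (hM : IsMinimalCounterexample N H) (hK : K ≤ H)
    (h : IsLabelling K N C) {v y t : V} (hvy : K.Adj v y) (hy : H.degree y = 2)
    (hyt : H.Adj y t) (htv : t ≠ v) {e p : Fin (3 * N)} (hev : e ∈ C v) (hey : e ∈ C y)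
    (hpe : p ≠ e) (hp : p ∉ blockedColors H (isolate K {y}) C v) (hpt : p ∉ C t) :
    ∃ C', IsLabelling K N C' ∧ SameEdgeColors (trim H K {v}) C C' ∧
      (∀ s, s ≠ v → C' s ≠ C s → H.Adj v s ∧ H.degree s = 2) ∧ (e ∈ C' v → IsFree K C' v e) := by
  have hN := hM.seven_le
  have hnbr (s : V) (hys : K.Adj y s) : s = v ∨ s = t :=
    eq_or_eq_of_degree_le_two hy.le (hK hvy.symm) hyt htv.symm (hK hys)
  have hef := h.isFree_isolate hvy hev hey
  obtain ⟨C₁, h₁, hs₁, hpf, hC₁v, hC₁⟩ := (h.mono (isolate_le K {y}))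
    |>.exists_isFree_of_notMem_blockedColors (by omega) ((isolate_le K {y}).trans hK) hef hp
  have hC₁t : C₁ t = C t := by
    by_contra hne
    exact hM.not_adj_of_degree_eq_two hy (hK hvy.symm) hyt (hK (hC₁ t htv hne).1.1)
  obtain ⟨e', he'⟩ : ∃ e', K.Adj y t → e' ∈ C y ∧ e' ∈ C t := by
    by_cases hKyt : K.Adj y t
    · exact (h.exists_common hKyt).imp fun _ he' _ => he'
    · exact ⟨e, fun hKyt' => absurd hKyt' hKyt⟩
  obtain ⟨C', h', hC', hpy, hey'⟩ := h₁.exists_insertion (e := e') (by omega) hnbr htv.symm hpf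
    (hC₁t ▸ hpt) fun hyt => by
      obtain ⟨hey', het'⟩ := he' hyt
      refine ⟨hs₁.isFree (h.isFree_isolate hyt.symm het' hey') (hC₁t ▸ het'), fun hev' => ?_⟩
      obtain rfl | hev' := Finset.mem_insert.1 (hC₁v hev')
      · exact hpt het'
      · exact h.notMem hyt hvy.symm htv hey' het' hev'
  have hC'v : C' v = C₁ v := hC' v hvy.ne
  refine ⟨C', h', .of_isolate (u := y) (fun a b hab c => ?_) (fun s hys c => ?_),
    fun s hsv hs => ?_, fun hev' => ⟨hev', fun s hvs hes => ?_⟩⟩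
  · rw [hC' a hab.2.1, hC' b hab.2.2]
    exact hs₁ ⟨hab.1.1, hab.2⟩ c
  · obtain rfl | rfl := hnbr s hys.1
    · exact absurd hy (hys.2.2 rfl)
    · rw [h.mem_and_mem_iff hys.1 (he' hys.1).1 (he' hys.1).2, h'.mem_and_mem_iff hys.1
        (hey' hys.1) (by rw [hC' s hys.1.ne', hC₁t]; exact (he' hys.1).2)]
  · by_cases hsy : s = y
    · exact hsy ▸ ⟨hK hvy, hy⟩
    · exact (hC₁ s hsv (hC' s hsy ▸ hs)).imp (fun hvs => hK hvs.1) id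
  · by_cases hsy : s = y
    · subst hsy
      exact hpe (h'.eq_of_common hvs (hC'v ▸ hpf.1) (hpy hvs.symm) hev' hes)
    · have hvs' : (isolate K {y}).Adj v s := ⟨hvs, hvy.ne, hsy⟩
      exact hef.2 s hvs' ((hs₁ hvs' e).2 ⟨hC'v ▸ hev', hC' s hsy ▸ hes⟩).2

lemma exists_recoloring (hM : IsMinimalCounterexample N H) (hK : K ≤ H) (h : IsLabelling K N C)
    {v z : V} (hv : IsPoor H v) (hvz : H.Adj v z) (hKvz : ¬K.Adj v z) (hz : H.degree z = 2)
    {e : Fin (3 * N)} (he : ∀ x, K.Adj v x → e ∈ C v → e ∈ C x → H.degree x = 2) :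
    ∃ C', IsLabelling K N C' ∧ SameEdgeColors (trim H K {v}) C C' ∧
      (∀ s, s ≠ v → C' s ≠ C s → H.Adj v s ∧ H.degree s = 2) ∧ (e ∈ C' v → IsFree K C' v e) := by
  by_cases hused : IsUsed K C v e
  · obtain ⟨hev, y, hvy, hey⟩ := hused
    have hy := he y hvy hev hey
    obtain ⟨t, hyt, htv⟩ := exists_adj_ne_of_degree_eq_two hy v
    have hN := hM.seven_le
    have hcard := (h.mono (isolate_le K {y})).card_blockedColors_le (by omega)
      ((isolate_le K {y}).trans hK) hv hvz (fun hvz' => hKvz hvz'.1) hz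
    obtain ⟨p, hp⟩ := exists_notMem_of_card_lt
      (F := insert e (blockedColors H (isolate K {y}) C v ∪ C t)) (by
        have := Finset.card_insert_le e (blockedColors H (isolate K {y}) C v ∪ C t)
        have := Finset.card_union_le (blockedColors H (isolate K {y}) C v) (C t)
        have := h.card_eq t
        omega)
    simp only [Finset.mem_insert, Finset.mem_union, not_or] at hp
    exact hM.exists_recoloring_of_adj hK h hvy hy hyt htv hev hey hp.1 hp.2.1 hp.2.2
  · exact ⟨C, h, .refl _ C, fun _ _ hs => absurd rfl hs,
      fun hev => (not_isUsed_iff_isFree hev).1 hused⟩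

lemma exists_removal_of_isPoor (hM : IsMinimalCounterexample N H) (hK : K ≤ H)
    (h : IsLabelling K N C) {v z : V} (hv : IsPoor H v) (hvz : H.Adj v z) (hKvz : ¬K.Adj v z)
    (hz : H.degree z = 2) {e : Fin (3 * N)}
    (he : ∀ x, K.Adj v x → e ∈ C v → e ∈ C x → H.degree x = 2) :
    ∃ C', IsLabelling K N C' ∧ SameEdgeColors (trim H K {v}) C C' ∧
      (∀ s, s ≠ v → C' s ≠ C s → H.Adj v s ∧ H.degree s = 2) ∧ e ∉ C' v := by
  have hN := hM.seven_le
  obtain ⟨C₁, h₁, hs₁, hC₁, he₁⟩ := hM.exists_recoloring hK h hv hvz hKvz hz he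
  by_cases hev : e ∈ C₁ v
  · have hcard := h₁.card_blockedColors_le (by omega) hK hv hvz hKvz hz
    obtain ⟨p, hp⟩ := exists_notMem_of_card_lt (F := blockedColors H K C₁ v ∪ C₁ v) (by
      have := Finset.card_union_le (blockedColors H K C₁ v) (C₁ v)
      have := h₁.card_eq v
      omega)
    simp only [Finset.mem_union, not_or] at hp
    obtain ⟨C', h', hs', hv', hC'⟩ :=
      h₁.exists_swap_of_notMem_blockedColors (by omega) hK (he₁ hev) hp.2 hp.1
    refine ⟨C', h', hs₁.trans (hs'.mono (trim_le H K {v})), fun s hsv hs => ?_, by grind⟩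
    by_cases hs' : C' s = C₁ s
    · exact hC₁ s hsv (hs' ▸ hs)
    · exact (hC' s hsv hs').imp (fun hvs => hK hvs) id
  · exact ⟨C₁, h₁, hs₁, hC₁, hev⟩

lemma exists_isFree_of_isPoor (hM : IsMinimalCounterexample N H) (hK : K ≤ H)
    (h : IsLabelling K N C) {v z : V} (hv : IsPoor H v) (hvz : H.Adj v z) (hKvz : ¬K.Adj v z)
    (hz : H.degree z = 2) {e : Fin (3 * N)}
    (he : ∀ x, K.Adj v x → e ∈ C v → e ∈ C x → H.degree x = 2)
    {S : Finset (Fin (3 * N))} (hS : S.card ≤ N) (heS : e ∈ S) :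
    ∃ C' p, IsLabelling K N C' ∧ SameEdgeColors (trim H K {v}) C C' ∧
      (∀ s, s ≠ v → C' s ≠ C s → H.Adj v s ∧ H.degree s = 2) ∧ IsFree K C' v p ∧ p ∉ S ∧
      e ∉ C' v := by
  have hN := hM.seven_le
  obtain ⟨C₁, h₁, hs₁, hC₁, hev⟩ := hM.exists_removal_of_isPoor hK h hv hvz hKvz hz he
  have hcard := h₁.card_blockedColors_le (by omega) hK hv hvz hKvz hz
  obtain ⟨p, hp⟩ := exists_notMem_of_card_lt (F := blockedColors H K C₁ v ∪ S) (by
    have := Finset.card_union_le (blockedColors H K C₁ v) S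
    omega)
  simp only [Finset.mem_union, not_or] at hp
  obtain ⟨g, hg⟩ := h₁.exists_isFree (v := v) (by
    have := degree_le_of_le hK v
    have := hv.degree_le
    omega)
  obtain ⟨C', h', hs', hpf, hv', hC'⟩ :=
    h₁.exists_isFree_of_notMem_blockedColors (by omega) hK hg hp.1
  refine ⟨C', p, h', hs₁.trans (hs'.mono (trim_le _ _ _)), fun s hsv hs => ?_, hpf, hp.2,
    fun hev' => ?_⟩
  · by_cases hs' : C' s = C₁ s
    · exact hC₁ s hsv (hs' ▸ hs)
    · exact (hC' s hsv hs').imp (fun hvs => hK hvs) id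
  · obtain rfl | hev' := Finset.mem_insert.1 (hv' hev')
    · exact hp.2 heS
    · exact hev hev'

lemma exists_insertion_of_isPoor (hM : IsMinimalCounterexample N H) (hK : K ≤ H) {v z w : V}
    (h : IsLabelling (isolate K {z}) N C) (hv : IsPoor H v) (hz : H.degree z = 2)
    (hzv : K.Adj z v) (hzw : K.Adj z w) (hvw : v ≠ w) {e : Fin (3 * N)}
    (hew : IsFree (isolate K {z}) C w e)
    (he : ∀ x, K.Adj v x → e ∈ C v → e ∈ C x → H.degree x = 2) :
    ∃ C', IsLabelling K N C' ∧ SameEdgeColors (trim H (isolate K {z}) {v}) C C' ∧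
      (∀ s, s ≠ v → C' s ≠ C s → H.Adj v s ∧ H.degree s = 2) ∧ e ∈ C' z := by
  have hN := hM.seven_le
  have hiso := (isolate_le K {z}).trans hK
  have hvw' : ¬H.Adj v w := hM.not_adj_of_degree_eq_two hz (hK hzv) (hK hzw)
  obtain ⟨C₁, p, h₁, hs₁, hC₁, hpv, hpw, hev⟩ := hM.exists_isFree_of_isPoor hiso h hv
    (hK hzv).symm (by simp) hz (fun x hvx => he x hvx.1) (h.card_eq w).le hew.1
  have hw : C₁ w = C w := not_imp_comm.1 (hC₁ w hvw.symm) fun hw => hvw' hw.1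
  have hew₁ : IsFree (isolate K {z}) C₁ w e := by
    refine ⟨hw ▸ hew.1, fun s hws hes => ?_⟩
    have hws' : (trim H (isolate K {z}) {v}).Adj w s :=
      ⟨hws, fun hwv => absurd hwv hvw.symm, fun hsv => absurd (hiso hws.symm) (hsv ▸ hvw')⟩
    exact hew.2 s hws ((hs₁ hws' e).2 ⟨hw ▸ hew.1, hes⟩).2
  obtain ⟨C', h', hC', -, hez⟩ := h₁.exists_insertion (e := e) (by omega)
    (fun s hzs => eq_or_eq_of_degree_le_two hz.le (hK hzv) (hK hzw) hvw (hK hzs)) hvw hpv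
    (hw ▸ hpw) fun _ => ⟨hew₁, hev⟩
  refine ⟨C', h', fun a b hab c => ?_, fun s hsv hs => ?_, hez hzw⟩
  · rw [hC' a hab.1.2.1, hC' b hab.1.2.2]
    exact hs₁ hab c
  · by_cases hsz : s = z
    · exact hsz ▸ ⟨(hK hzv).symm, hz⟩
    · exact hC₁ s hsv (hC' s hsz ▸ hs)

/- Otherwise `z` could be put back with an edge `zw` of color `e`. -/
lemma exists_degree_ne_two_of_isFree (hM : IsMinimalCounterexample N H) {v z w : V}
    (h : IsLabelling (isolate H {z}) N C) (hv : IsPoor H v) (hz : H.degree z = 2)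
    (hzv : H.Adj z v) (hzw : H.Adj z w) (hvw : v ≠ w) {e : Fin (3 * N)}
    (hew : IsFree (isolate H {z}) C w e) :
    e ∈ C v ∧ ∃ x, H.Adj v x ∧ H.degree x ≠ 2 ∧ e ∈ C x := by
  by_contra hcon
  obtain ⟨C', h', -⟩ := hM.exists_insertion_of_isPoor le_rfl h hv hz hzv hzw hvw hew
    fun x hvx hev hex => by_contra fun hx => hcon ⟨hev, x, hvx, hx, hex⟩
  exact hM.not_isLabelling C' h'

lemma eq_of_isFree (hM : IsMinimalCounterexample N H) {v z w : V}
    (h : IsLabelling (isolate H {z}) N C) (hv : IsPoor H v) (hz : H.degree z = 2)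
    (hzv : H.Adj z v) (hzw : H.Adj z w) (hvw : v ≠ w) {e e' : Fin (3 * N)}
    (hew : IsFree (isolate H {z}) C w e) (hew' : IsFree (isolate H {z}) C w e') : e = e' := by
  obtain ⟨hev, x, hvx, hx, hex⟩ :=
    hM.exists_degree_ne_two_of_isFree h hv hz hzv hzw hvw hew
  obtain ⟨hev', x', hvx', hx', hex'⟩ :=
    hM.exists_degree_ne_two_of_isFree h hv hz hzv hzw hvw hew'
  obtain rfl := hv.eq_of_adj hvx hvx' hx hx'
  exact h.eq_of_common ⟨hvx, hzv.ne', fun hxz => hx (hxz ▸ hz)⟩ hev hex hev' hex'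

lemma degree_eq_of_isPoorLink (hM : IsMinimalCounterexample N H) {w z : V}
    (hz : IsPoorLink H w z) : H.degree w = N := by
  obtain ⟨hwz, hz, v, hvw, hzv, hv⟩ := hz
  obtain ⟨C, h⟩ := hM.exists_isLabelling z (by omega)
  have hlt := degree_isolate_lt hwz.symm
  have hle := hM.degree_le w
  by_contra hne
  obtain ⟨e, hew⟩ := h.exists_isFree (v := w) (by omega)
  obtain ⟨e', hew', hne'⟩ := h.exists_isFree_notMem (v := w) (F := {e}) (by simp; omega)
  exact hne' (by simpa using hM.eq_of_isFree h hv hz hzv hwz.symm hvw hew' hew)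

end IsMinimalCounterexample

end Reinsertion

section PoorLinks

variable {V : Type*} {N : ℕ}

lemma IsLabelling.exists_edgeColor {K : SimpleGraph V} {C : V → Finset (Fin (3 * N))}
    (h : IsLabelling K N C) {x z : V} (hxz : ¬K.Adj x z) (f : Fin (3 * N)) :
    ∃ γ : V → Fin (3 * N), γ z = f ∧ ∀ y, K.Adj x y → γ y ∈ C x ∧ γ y ∈ C y := by
  have (y : V) : ∃ c, (y = z → c = f) ∧ (K.Adj x y → c ∈ C x ∧ c ∈ C y) := by
    by_cases hxy : K.Adj x y
    · exact (h.exists_common hxy).imp fun _ hc =>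
        ⟨fun hyz => absurd (hyz ▸ hxy) hxz, fun _ => hc⟩
    · exact ⟨f, fun _ => rfl, fun hxy' => absurd hxy' hxy⟩
  choose γ hγ using this
  exact ⟨γ, (hγ z).1 rfl, fun y => (hγ y).2⟩

variable [Fintype V] {H K L : SimpleGraph V} {C : V → Finset (Fin (3 * N))}

lemma trim_mono {S T : Set V} (hL : L ≤ K) (hS : S ⊆ T) : trim H L T ≤ trim H K S :=
  fun _ _ h => ⟨hL h.1, fun hx => h.2.1 (hS hx), fun hy => h.2.2 (hS hy)⟩

lemma IsPoorLink.isPoor_of_adj {w z s : V} (hz : IsPoorLink H w z) (hzs : H.Adj z s)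
    (hsw : s ≠ w) : IsPoor H s := by
  obtain ⟨hwz, hz, v, hvw, hzv, hv⟩ := hz
  obtain rfl | rfl := eq_or_eq_of_degree_le_two hz.le hzv hwz.symm hvw hzs
  · exact hv
  · exact absurd rfl hsw

/-- The colors `γ z` may be given to the edges joining `w` to the poor links `z ∈ E`, starting
from a labelling `C` in which these links are isolated. -/
structure IsAdmissible (H K : SimpleGraph V) (w : V) (E : Finset V) (γ : V → Fin (3 * N))
    (C : V → Finset (Fin (3 * N))) : Prop where
  isPoorLink : ∀ z ∈ E, IsPoorLink H w z
  adj : ∀ z ∈ E, ∀ s, H.Adj z s → K.Adj z s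
  injOn : Set.InjOn γ E
  isFree : ∀ z ∈ E, IsFree (isolate K E) C w (γ z)
  degree_eq : ∀ z ∈ E, ∀ v x, H.Adj z v → v ≠ w → K.Adj v x → γ z ∈ C v → γ z ∈ C x →
    H.degree x = 2

namespace IsMinimalCounterexample

lemma not_isLight_of_isPoorLink (hM : IsMinimalCounterexample N H) {w z : V}
    (hz : IsPoorLink H w z) : ¬IsLight H w := fun hw => by
  have := hM.seven_le
  have := hM.degree_eq_of_isPoorLink hz
  have := hw.degree_le
  omega

lemma not_isPoor_of_isPoorLink (hM : IsMinimalCounterexample N H) {w z : V}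
    (hz : IsPoorLink H w z) : ¬IsPoor H w := fun hw => by
  have := hM.seven_le
  have := hM.degree_eq_of_isPoorLink hz
  have := hw.degree_le
  omega

lemma degree_ne_two_of_isPoorLink (hM : IsMinimalCounterexample N H) {w z : V}
    (hz : IsPoorLink H w z) : H.degree w ≠ 2 :=
  fun hw => hM.not_isLight_of_isPoorLink hz (.inl hw)

lemma isAdmissible_of_insert (hM : IsMinimalCounterexample N H) (hK : K ≤ H) {w z : V}
    {E : Finset V} {γ : V → Fin (3 * N)} (hzE : z ∉ E)
    (hE : IsAdmissible H K w (insert z E) γ C) {v : V} (hzv : H.Adj z v) (hvw : v ≠ w)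
    {C' : V → Finset (Fin (3 * N))} (h' : IsLabelling (isolate K E) N C')
    (hs : SameEdgeColors (trim H (isolate (isolate K E) {z}) {v}) C C') (hw : C' w = C w)
    (hγz : γ z ∈ C' z) : IsAdmissible H K w E γ C' where
  isPoorLink a ha := hE.isPoorLink a (Finset.mem_insert_of_mem ha)
  adj a ha := hE.adj a (Finset.mem_insert_of_mem ha)
  injOn := hE.injOn.mono (by simp)
  isFree a ha := by
    have hzl := hE.isPoorLink z (Finset.mem_insert_self z E)
    have hfree := hE.isFree
    rw [Finset.coe_insert, isolate_insert] at hfree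
    have haw := hfree a (Finset.mem_insert_of_mem ha)
    refine ⟨hw ▸ haw.1, fun y hwy hay => ?_⟩
    by_cases hyz : y = z
    · subst hyz
      have haz := h'.eq_of_common hwy (hw ▸ haw.1) hay
        (hw ▸ (hfree y (Finset.mem_insert_self y E)).1) hγz
      exact hzE (hE.injOn (by simp [ha]) (by simp) haz ▸ ha)
    · have hwy' : (trim H (isolate (isolate K E) {z}) {v}).Adj w y :=
        ⟨⟨hwy, hzl.1.ne, hyz⟩, fun hwv => absurd hwv.symm hvw,
          fun _ => hM.degree_ne_two_of_isPoorLink hzl⟩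
      exact haw.2 y hwy'.1 ((hs hwy' _).2 ⟨hw ▸ haw.1, hay⟩).2
  degree_eq a ha b x hab hbw hbx hcb hcx := by
    by_contra hx
    have ha' := Finset.mem_insert_of_mem (b := z) ha
    have hal := hE.isPoorLink a ha'
    have hb {y : V} (hy : y ∈ insert z E) : b ≠ y := fun hby =>
      hM.not_adj_of_degree_eq_two hal.2.1 hab hal.1.symm (hE.isPoorLink b (hby ▸ hy)).1.symm
    have hx' {y : V} (hy : y ∈ insert z E) : x ≠ y := fun hxy =>
      hx (hxy ▸ (hE.isPoorLink y hy).2.1)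
    have hbx' : (trim H (isolate (isolate K E) {z}) {v}).Adj b x := by
      refine ⟨⟨⟨hbx, fun hbE => ?_, fun hxE => ?_⟩, hb (by simp), hx' (by simp)⟩, fun _ => hx,
        fun hxv hb2 => ?_⟩
      · exact hb (Finset.mem_insert_of_mem hbE) rfl
      · exact hx' (Finset.mem_insert_of_mem hxE) rfl
      · have hzl := hE.isPoorLink z (Finset.mem_insert_self z E)
        have hxp := hzl.isPoor_of_adj (hxv ▸ hzv) (hxv ▸ hvw)
        exact hM.degree_ne_two_of_isPoorLink
          (⟨hab, hb2, x, hx' ha', hK hbx, hxp⟩ : IsPoorLink H a b) hal.2.1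
    have hc := (hs hbx' _).2 ⟨hcb, hcx⟩
    exact hx (hE.degree_eq a ha' b x hab hbw hbx hc.1 hc.2)

lemma exists_insertion_of_isAdmissible (hM : IsMinimalCounterexample N H) (hK : K ≤ H) {w : V}
    {E : Finset V} {γ : V → Fin (3 * N)} (h : IsLabelling (isolate K E) N C)
    (hE : IsAdmissible H K w E γ C) :
    ∃ C', IsLabelling K N C' ∧ SameEdgeColors (trim H (isolate K E) {x | IsPoor H x}) C C' ∧
      (∀ y, ¬IsPoor H y → H.degree y ≠ 2 → C' y = C y) ∧ ∀ z ∈ E, γ z ∈ C' z := by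
  induction E using Finset.induction_on generalizing C with
  | empty =>
    refine ⟨C, by simpa using h, .refl _ C, fun _ _ _ => rfl, by simp⟩
  | insert z E hzE ih =>
    have hzl := hE.isPoorLink z (Finset.mem_insert_self z E)
    have hw2 := hM.degree_ne_two_of_isPoorLink hzl
    have hwp := hM.not_isPoor_of_isPoorLink hzl
    have hzK := hE.adj z (Finset.mem_insert_self z E)
    obtain ⟨hwz, hz, v, hvw, hzv, hv⟩ := id hzl
    have hvE : v ∉ E := fun hvE => hM.not_adj_of_degree_eq_two hz hzv hwz.symm
      (hE.isPoorLink v (Finset.mem_insert_of_mem hvE)).1.symm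
    have hwE : w ∉ E := fun hwE =>
      hw2 (hE.isPoorLink w (Finset.mem_insert_of_mem hwE)).2.1
    have hiso : isolate K (insert z E : Finset V) = isolate (isolate K E) {z} := by
      rw [Finset.coe_insert, isolate_insert]
    have hγw := hE.isFree z (Finset.mem_insert_self z E)
    rw [hiso] at h hγw ⊢
    obtain ⟨C₁, h₁, hs₁, hC₁, hγz⟩ := hM.exists_insertion_of_isPoor ((isolate_le K E).trans hK) h
      hv hz ⟨hzK v hzv, hzE, hvE⟩ ⟨hzK w hwz.symm, hzE, hwE⟩ hvw hγw fun x hvx =>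
        hE.degree_eq z (Finset.mem_insert_self z E) v x hzv hvw hvx.1
    have hC₁' (y : V) (hy : ¬IsPoor H y) (hy2 : H.degree y ≠ 2) : C₁ y = C y :=
      not_imp_comm.1 (hC₁ y fun hyv => hy (hyv ▸ hv)) fun hy => hy2 hy.2
    have hw := hC₁' w hwp hw2
    obtain ⟨C', h', hs', hC', hγ⟩ :=
      ih h₁ (hM.isAdmissible_of_insert hK hzE hE hzv hvw h₁ hs₁ hw hγz)
    refine ⟨C', h', (hs₁.mono (trim_mono le_rfl (by simpa using hv))).trans
      (hs'.mono (trim_mono (isolate_le _ _) le_rfl)),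
      fun y hy hy2 => (hC' y hy hy2).trans (hC₁' y hy hy2), fun a ha => ?_⟩
    obtain rfl | ha := Finset.mem_insert.1 ha
    · exact ((hs' ⟨⟨hzK w hwz.symm, hzE, hwE⟩, fun _ => hw2, fun hw => absurd hw hwp⟩ _).1
        ⟨hγz, hw ▸ hγw.1⟩).1
    · exact hγ a ha

end IsMinimalCounterexample

end PoorLinks

section Swap

variable {V : Type*} [Fintype V] {N : ℕ} {H K : SimpleGraph V} {C : V → Finset (Fin (3 * N))}

namespace IsMinimalCounterexample

lemma isAdmissible_of_swap (hM : IsMinimalCounterexample N H) {x z : V}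
    (h : IsLabelling (isolate K {z}) N C) {q f : Fin (3 * N)}
    (hq : IsFree (isolate K {z}) C x q) (hfx : f ∉ C x) {γ : V → Fin (3 * N)} (hγz : γ z = f)
    (hγ : ∀ y, (isolate K {z}).Adj x y → γ y ∈ C x ∧ γ y ∈ C y) {E : Finset V} (hzE : z ∈ E)
    (hE : ∀ y ∈ E, K.Adj x y ∧ IsPoorLink H x y ∧ ∀ s, H.Adj y s → K.Adj y s)
    (hfz : ∀ v r, H.Adj z v → v ≠ x → K.Adj v r → f ∈ C v → f ∈ C r → H.degree r = 2)
    {C₁ : V → Finset (Fin (3 * N))} (hs : SameEdgeColors (isolate K E) C C₁)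
    (hx : C₁ x = insert f ((C x).erase q)) : IsAdmissible H K x E γ C₁ := by
  have hKE {y : V} (hy : y ∈ E) (hyz : y ≠ z) : (isolate K {z}).Adj x y :=
    ⟨(hE y hy).1, (hE z hzE).1.ne, hyz⟩
  have hγx {y : V} (hy : y ∈ E) : γ y ∈ C₁ x := by
    by_cases hyz : y = z
    · simp [hx, hyz, hγz]
    · have hyx := hγ y (hKE hy hyz)
      have hne : γ y ≠ q := fun he => hq.2 y (hKE hy hyz) (he ▸ hyx.2)
      simp [hx, hyx.1, hne]
  refine ⟨fun y hy => (hE y hy).2.1, fun y hy => (hE y hy).2.2, fun y hy t ht hyt => ?_,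
    fun y hy => ⟨hγx hy, fun s hxs hys => ?_⟩, fun y hy v r hyv hvx hvr hv hr => ?_⟩
  · by_contra hne
    by_cases hyz : y = z
    · subst hyz
      exact hfx (hγz ▸ hyt ▸ (hγ t (hKE ht (Ne.symm hne))).1)
    by_cases htz : t = z
    · exact hfx (hγz ▸ htz ▸ hyt ▸ (hγ y (hKE hy hyz)).1)
    have hyC := hγ y (hKE hy hyz)
    exact h.notMem (hKE hy hyz) (hKE ht htz) hne hyC.1 hyC.2 (hyt ▸ (hγ t (hKE ht htz)).2)
  · have hyC := (hs hxs _).2 ⟨hγx hy, hys⟩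
    by_cases hyz : y = z
    · exact hfx (hγz ▸ hyz ▸ hyC.1)
    · exact h.notMem (hKE hy hyz) ⟨hxs.1, (hE z hzE).1.ne, fun hsz => hxs.2.2 (hsz ▸ hzE)⟩
        (fun hys => hxs.2.2 (hys ▸ hy)) hyC.1 (hγ y (hKE hy hyz)).2 hyC.2
  · by_contra hr2
    have hyl := (hE y hy).2.1
    have hvE : v ∉ E := fun hvE => hM.not_adj_of_degree_eq_two hyl.2.1 hyv hyl.1.symm
      (hE v hvE).2.1.1.symm
    have hvr' : (isolate K E).Adj v r := ⟨hvr, hvE, fun hrE => hr2 (hE r hrE).2.1.2.1⟩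
    have hc := (hs hvr' _).2 ⟨hv, hr⟩
    by_cases hyz : y = z
    · subst hyz
      exact hr2 (hfz v r hyv hvx hvr (hγz ▸ hc.1) (hγz ▸ hc.2))
    · have hyC := hγ y (hKE hy hyz)
      exact h.notMem (hKE hy hyz).symm ⟨(hE y hy).2.2 v hyv, hyz, fun hvz => hvE (hvz ▸ hzE)⟩
        hvx.symm hyC.2 hyC.1 hc.1

/- All links from `x` to poor vertices are isolated, `f` is exchanged with `q` at `x`, and the
links are put back; each keeps the color of its edge to `x`, except that `z` gets `f`. -/
lemma exists_swap_of_isPoorLink (hM : IsMinimalCounterexample N H) (hK : K ≤ H) {x z : V}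
    (h : IsLabelling (isolate K {z}) N C) (hz : IsPoorLink H x z) (hxz : K.Adj x z)
    (hlink : ∀ y, IsPoorLink H x y → K.Adj x y → ∀ s, H.Adj y s → K.Adj y s)
    {q f : Fin (3 * N)} (hq : IsFree (isolate K {z}) C x q) (hfx : f ∉ C x)
    (hnbr : ∀ r, K.Adj x r → ¬IsPoorLink H x r → f ∈ C r →
      IsLight H r ∧ ¬IsUsed (isolate K {z}) C r f)
    (hfz : ∀ v r, H.Adj z v → v ≠ x → K.Adj v r → f ∈ C v → f ∈ C r → H.degree r = 2) :
    ∃ C', IsLabelling K N C' ∧ SameEdgeColors (trim H (isolate K {z}) {y | IsPoor H y}) C C' ∧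
      C' x = insert f ((C x).erase q) ∧
      ∀ y, y ≠ x → ¬IsLight H y → ¬IsPoor H y → C' y = C y := by
  have hN := hM.seven_le
  set E : Finset V := {y ∈ K.neighborFinset x | IsPoorLink H x y}
  have hE {y : V} : y ∈ E ↔ K.Adj x y ∧ IsPoorLink H x y := by simp [E]
  have hzE : z ∈ E := hE.2 ⟨hxz, hz⟩
  have hKE : isolate K E ≤ isolate K {z} := isolate_mono le_rfl (by simpa using hzE)
  obtain ⟨C₁, h₁, hs₁, hx₁, hC₁⟩ := (h.mono hKE).exists_swap (H := H) (p := f) (by omega)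
    ((isolate_le K E).trans hK) (hq.mono hKE) hfx fun s hxs hfs => by
      obtain ⟨hs, hs'⟩ := hnbr s hxs.1 (fun hs => hxs.2.2 (hE.2 ⟨hxs.1, hs⟩)) hfs
      exact ⟨hs, fun hx => hM.not_isLight_of_isPoorLink hz (hs.of_mem_cluster hx),
        fun hused => hs' (hused.mono hKE)⟩
  obtain ⟨γ, hγz, hγ⟩ := h.exists_edgeColor (x := x) (z := z) (fun hxz => hxz.2.2 rfl) f
  have hadm := hM.isAdmissible_of_swap h hq hfx hγz hγ hzE
    (fun y hy => ⟨(hE.1 hy).1, (hE.1 hy).2, hlink y (hE.1 hy).2 (hE.1 hy).1⟩) hfz hs₁ hx₁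
  obtain ⟨C', h', hs', hC', hγ'⟩ := hM.exists_insertion_of_isAdmissible hK h₁ hadm
  have hx : C' x = insert f ((C x).erase q) :=
    (hC' x (hM.not_isPoor_of_isPoorLink hz) (hM.degree_ne_two_of_isPoorLink hz)).trans hx₁
  have hlinkColor {a b : V} (ha : a ∈ E)
      (hab : (trim H (isolate K {z}) {y | IsPoor H y}).Adj a b) (c : Fin (3 * N)) :
      c ∈ C a ∧ c ∈ C b ↔ c ∈ C' a ∧ c ∈ C' b := by
    obtain rfl : b = x := by_contra fun hbx => hab.2.2
      ((hE.1 ha).2.isPoor_of_adj (hK hab.1.1) hbx) (hE.1 ha).2.2.1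
    have haC := hγ a hab.1.symm
    rw [h.mem_and_mem_iff hab.1 haC.2 haC.1,
      h'.mem_and_mem_iff hab.1.1 (hγ' a ha) (hx ▸ hx₁ ▸ (hadm.isFree a ha).1)]
  refine ⟨C', h', fun a b hab c => ?_, hx, fun y hyx hyl hyp => ?_⟩
  · by_cases ha : a ∈ E
    · exact hlinkColor ha hab c
    by_cases hb : b ∈ E
    · rw [and_comm, hlinkColor hb hab.symm, and_comm]
    have hab' : (isolate K E).Adj a b := ⟨hab.1.1, ha, hb⟩
    exact (hs₁ hab' c).trans (hs' ⟨hab', hab.2⟩ c)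
  · rw [hC' y hyp fun hy => hyl (.inl hy)]
    by_contra hne
    obtain ⟨t, -, ht, -, hyt⟩ := hC₁ y hyx hne
    exact hyl (ht.of_mem_cluster hyt)

lemma exists_isUsed_of_isPoorLink (hM : IsMinimalCounterexample N H) {x z : V}
    (hz : IsPoorLink H x z) (h : IsLabelling (isolate H {z}) N C) {f : Fin (3 * N)}
    (hfx : f ∉ C x) (hfr : ∀ r, H.Adj x r → ¬IsLight H r → f ∉ C r) :
    ∃ t, H.Adj x t ∧ IsLight H t ∧ ¬IsPoorLink H x t ∧ IsUsed (isolate H {z}) C t f := by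
  by_contra! hcon
  have hlt := degree_isolate_lt hz.1.symm
  have hle := hM.degree_le x
  obtain ⟨q, hq⟩ := h.exists_isFree (v := x) (by omega)
  obtain ⟨hxz, hz2, v, hvx, hzv, hv⟩ := id hz
  obtain ⟨hqv, r, hvr, hr, hqr⟩ :=
    hM.exists_degree_ne_two_of_isFree h hv hz2 hzv hxz.symm hvx hq
  obtain ⟨C', h', -⟩ := hM.exists_swap_of_isPoorLink le_rfl h hz hxz (fun _ _ _ _ => id) hq hfx
    (fun t hxt ht hft => by
      have htl : IsLight H t := by_contra fun htl => hfr t hxt htl hft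
      exact ⟨htl, hcon t hxt htl ht⟩) fun v' r' hzv' hvx' hvr' hfv hfr' => by
        by_contra hr'
        obtain rfl := (eq_or_eq_of_degree_le_two hz2.le hzv hxz.symm hvx hzv').resolve_right hvx'
        obtain rfl := hv.eq_of_adj hvr hvr' hr hr'
        exact hfx (h.eq_of_common ⟨hvr, hzv.ne', fun hrz => hr (hrz ▸ hz2)⟩ hqv hqr hfv hfr' ▸ hq.1)
  exact hM.not_isLabelling C' h'

end IsMinimalCounterexample

end Swap

section Classification

variable {V : Type*} [Fintype V] {N : ℕ} {H K : SimpleGraph V} {C : V → Finset (Fin (3 * N))}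

/-- The neighbors of `x` that are not light. -/
noncomputable def heavyNbrs (H : SimpleGraph V) (x : V) : Finset V :=
  {s ∈ H.neighborFinset x | ¬IsLight H s}

/-- The tiny neighbors of `x`. -/
noncomputable def tinyNbrs (H : SimpleGraph V) (x : V) : Finset V :=
  {s ∈ H.neighborFinset x | IsTiny H s}

/-- The neighbors of `x` of degree `2` that link `x` to a poor vertex. -/
noncomputable def poorLinks (H : SimpleGraph V) (x : V) : Finset V :=
  {s ∈ H.neighborFinset x | IsPoorLink H x s}

lemma mem_heavyNbrs {x s : V} : s ∈ heavyNbrs H x ↔ H.Adj x s ∧ ¬IsLight H s := by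
  simp [heavyNbrs]

lemma mem_tinyNbrs {x s : V} : s ∈ tinyNbrs H x ↔ H.Adj x s ∧ IsTiny H s := by
  simp [tinyNbrs]

lemma mem_poorLinks {x s : V} : s ∈ poorLinks H x ↔ IsPoorLink H x s := by
  simpa [poorLinks] using fun hs => hs.1

lemma poorLinks_subset_twoNbrs (x : V) : poorLinks H x ⊆ twoNbrs H x := fun _ hs =>
  mem_twoNbrs.2 ⟨(mem_poorLinks.1 hs).1, (mem_poorLinks.1 hs).2.1⟩

lemma card_heavyNbrs_add_card_tinyNbrs_add_card_twoNbrs (x : V) :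
    (heavyNbrs H x).card + (tinyNbrs H x).card + (twoNbrs H x).card = H.degree x := by
  have htiny : {s ∈ H.neighborFinset x | H.degree s ≠ 2 ∧ IsTiny H s} = tinyNbrs H x := by
    ext s
    have : IsTiny H s → H.degree s ≠ 2 := fun hs => by have := hs.1; omega
    simp only [Finset.mem_filter, tinyNbrs]
    tauto
  have hheavy : {s ∈ H.neighborFinset x | H.degree s ≠ 2 ∧ ¬IsTiny H s} = heavyNbrs H x := by
    simp [heavyNbrs, IsLight]
  rw [← card_twoNbrs_add x, ← htiny, ← hheavy, ← Finset.filter_filter, ← Finset.filter_filter,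
    ← Finset.card_filter_add_card_filter_not (s := {s ∈ H.neighborFinset x | H.degree s ≠ 2})
      (IsTiny H)]
  omega

lemma IsLabelling.card_isUsed_notMem_lt (h : IsLabelling K N C) {t x : V} (htx : K.Adj t x) :
    ({c | c ∉ C x ∧ IsUsed K C t c} : Finset (Fin (3 * N))).card < K.degree t := by
  obtain ⟨e, het, hex⟩ := h.exists_common htx
  refine (Finset.card_lt_card ?_).trans_le (h.card_isUsed t).le
  refine Finset.ssubset_iff.2 ⟨e, by simp [hex], fun c hc => ?_⟩
  obtain rfl | hc := Finset.mem_insert.1 hc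
  · exact Finset.mem_filter.2 ⟨het, het, x, htx, hex⟩
  · have hc := (Finset.mem_filter.1 hc).2.2
    exact Finset.mem_filter.2 ⟨hc.1, hc⟩

namespace IsMinimalCounterexample

/- Every color is in the label of `x`, in the label of a heavy neighbor, or used at a tiny neighbor
or at a neighbor of degree `2` that is no poor link. -/
lemma two_mul_add_le_of_isPoorLink (hM : IsMinimalCounterexample N H) {x z : V}
    (hz : IsPoorLink H x z) :
    2 * N + (heavyNbrs H x).card + (poorLinks H x).card ≤
      (heavyNbrs H x).card * N + 2 * (tinyNbrs H x).card + (twoNbrs H x).card := by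
  obtain ⟨C, h⟩ := hM.exists_isLabelling z (by have := hz.2.1; omega)
  set U : V → Finset (Fin (3 * N)) := fun t => {c | c ∉ C x ∧ IsUsed (isolate H {z}) C t c}
  have hU {t : V} (hxt : H.Adj x t) (htz : t ≠ z) : (U t).card + 1 ≤ H.degree t :=
    (h.card_isUsed_notMem_lt ⟨hxt.symm, htz, hz.1.ne⟩).trans_le (degree_le_of_le (isolate_le _ _) t)
  have hheavy := h.card_union_biUnion_add_card_le (t := x) (Q := heavyNbrs H x) fun s hs => by
    obtain ⟨hxs, hs⟩ := mem_heavyNbrs.1 hs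
    simpa using ⟨hxs, hz.1.ne, fun hsz => hs (.inl (hsz ▸ hz.2.1))⟩
  have htiny : ((tinyNbrs H x).biUnion U).card ≤ (tinyNbrs H x).card * 2 :=
    Finset.card_biUnion_le_card_mul _ _ _ fun t ht => by
      obtain ⟨hxt, ht, -⟩ := mem_tinyNbrs.1 ht
      have := hU hxt fun htz => by have := htz ▸ hz.2.1; omega
      omega
  have htwo : ((twoNbrs H x \ poorLinks H x).biUnion U).card ≤
      (twoNbrs H x \ poorLinks H x).card * 1 :=
    Finset.card_biUnion_le_card_mul _ _ _ fun t ht => by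
      obtain ⟨ht, htl⟩ := Finset.mem_sdiff.1 ht
      obtain ⟨hxt, ht⟩ := mem_twoNbrs.1 ht
      have := hU hxt fun htz => htl (mem_poorLinks.2 (htz ▸ hz))
      omega
  have hcover : (C x ∪ (heavyNbrs H x).biUnion C) ∪
      ((tinyNbrs H x).biUnion U ∪ (twoNbrs H x \ poorLinks H x).biUnion U) = Finset.univ := by
    refine Finset.eq_univ_of_forall fun f => ?_
    simp only [Finset.mem_union, Finset.mem_biUnion]
    by_contra! hf
    obtain ⟨t, hxt, ht, htl, hft⟩ := hM.exists_isUsed_of_isPoorLink hz h hf.1.1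
      fun r hxr hr => hf.1.2 r (mem_heavyNbrs.2 ⟨hxr, hr⟩)
    have hfU : f ∈ U t := by simp [U, hf.1.1, hft]
    obtain ht | ht := ht
    · exact hf.2.2 t (Finset.mem_sdiff.2 ⟨mem_twoNbrs.2 ⟨hxt, ht⟩,
        fun htl' => htl (mem_poorLinks.1 htl')⟩) hfU
    · exact hf.2.1 t (mem_tinyNbrs.2 ⟨hxt, ht⟩) hfU
  have hcard := congrArg Finset.card hcover
  rw [Finset.card_univ, Fintype.card_fin] at hcard
  have := Finset.card_union_le (C x ∪ (heavyNbrs H x).biUnion C)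
    ((tinyNbrs H x).biUnion U ∪ (twoNbrs H x \ poorLinks H x).biUnion U)
  have := Finset.card_union_le ((tinyNbrs H x).biUnion U)
    ((twoNbrs H x \ poorLinks H x).biUnion U)
  have := Finset.card_sdiff_add_card_eq_card (poorLinks_subset_twoNbrs (H := H) x)
  omega

end IsMinimalCounterexample

/-- The vertices that can afford to send one unit of charge to each tiny neighbor in addition to
what they send to their neighbors of degree `2`. -/
structure IsRich (H : SimpleGraph V) (x : V) : Prop where
  not_isPoor : ¬IsPoor H x
  card_le : (twoNbrs H x).card + (poorLinks H x).card + (tinyNbrs H x).card + 6 ≤ 2 * H.degree x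

/-- Vertices of maximum degree whose neighbors are two heavy vertices, one tiny vertex and
otherwise links to poor vertices. -/
structure IsHub (N : ℕ) (H : SimpleGraph V) (x : V) : Prop where
  degree_eq : H.degree x = N
  card_heavyNbrs : (heavyNbrs H x).card = 2
  card_tinyNbrs : (tinyNbrs H x).card = 1
  twoNbrs_subset : twoNbrs H x ⊆ poorLinks H x

/-- Vertices of degree at most `5` with few heavy neighbors: many colors are movable into their
labels. -/
def IsSmall (H : SimpleGraph V) (x : V) : Prop :=
  H.degree x = 3 ∨ H.degree x = 4 ∧ (heavyNbrs H x).card ≤ 1 ∨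
    H.degree x = 5 ∧ (heavyNbrs H x).card = 0

namespace IsMinimalCounterexample

lemma card_poorLinks_eq_zero_or (hM : IsMinimalCounterexample N H) (x : V) :
    (poorLinks H x).card = 0 ∨ H.degree x = N ∧
      2 * N + (heavyNbrs H x).card + (poorLinks H x).card ≤
        (heavyNbrs H x).card * N + 2 * (tinyNbrs H x).card + (twoNbrs H x).card := by
  obtain hx | ⟨z, hz⟩ := (poorLinks H x).eq_empty_or_nonempty
  · simp [hx]
  · rw [mem_poorLinks] at hz
    exact .inr ⟨hM.degree_eq_of_isPoorLink hz, hM.two_mul_add_le_of_isPoorLink hz⟩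

lemma card_twoNbrs_add_card_poorLinks_le (hM : IsMinimalCounterexample N H) {x : V}
    (hx : 4 ≤ H.degree x) (hp : ¬IsPoor H x) :
    (twoNbrs H x).card + (poorLinks H x).card + 6 ≤ 2 * H.degree x := by
  have hN := hM.seven_le
  have hdeg := card_heavyNbrs_add_card_tinyNbrs_add_card_twoNbrs (H := H) x
  have hsub := Finset.card_le_card (poorLinks_subset_twoNbrs (H := H) x)
  unfold IsPoor at hp
  obtain hl | ⟨hxN, hle⟩ := hM.card_poorLinks_eq_zero_or x
  · omega
  · obtain h0 | h1 | h2 | h3 : (heavyNbrs H x).card = 0 ∨ (heavyNbrs H x).card = 1 ∨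
        (heavyNbrs H x).card = 2 ∨ 3 ≤ (heavyNbrs H x).card := by omega
    · rw [h0] at hle
      omega
    · rw [h1] at hle
      omega
    · rw [h2] at hle
      omega
    · omega

lemma isSmall_or_isHub (hM : IsMinimalCounterexample N H) {x v : V} (hxv : H.Adj x v)
    (hv : IsTiny H v) (hx : 3 ≤ H.degree x) (hr : ¬IsRich H x) : IsSmall H x ∨ IsHub N H x := by
  have hN := hM.seven_le
  have hdeg := card_heavyNbrs_add_card_tinyNbrs_add_card_twoNbrs (H := H) x
  have hsub := poorLinks_subset_twoNbrs (H := H) x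
  have hle := Finset.card_le_card hsub
  have htiny : 1 ≤ (tinyNbrs H x).card := Finset.card_pos.2 ⟨v, mem_tinyNbrs.2 ⟨hxv, hv⟩⟩
  unfold IsSmall
  by_cases hx3 : H.degree x = 3
  · exact .inl (.inl hx3)
  by_cases hp : IsPoor H x
  · unfold IsPoor at hp
    omega
  have hlt : 2 * H.degree x < (twoNbrs H x).card + (poorLinks H x).card +
      (tinyNbrs H x).card + 6 := not_le.1 fun hle => hr ⟨hp, hle⟩
  obtain hl | ⟨hxN, hle'⟩ := hM.card_poorLinks_eq_zero_or x
  · omega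
  · have hheavy : (heavyNbrs H x).card = 2 := by
      obtain h0 | h1 | h2 | h3 : (heavyNbrs H x).card = 0 ∨ (heavyNbrs H x).card = 1 ∨
          (heavyNbrs H x).card = 2 ∨ 3 ≤ (heavyNbrs H x).card := by omega
      · rw [h0] at hle'
        omega
      · rw [h1] at hle'
        omega
      · exact h2
      · omega
    rw [hheavy] at hle'
    exact .inr ⟨hxN, hheavy, by omega, (Finset.eq_of_subset_of_card_le hsub (by omega)).ge⟩

end IsMinimalCounterexample

end Classification

section TinyConfig

lemma IsLabelling.exists_insertion_pair {V : Type*} [Finite V] {N : ℕ} {K : SimpleGraph V}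
    {C : V → Finset (Fin (3 * N))} {v x y u w : V}
    (h : IsLabelling (isolate (isolate K {u}) {v}) N C) (hN : 3 ≤ N)
    (hv : ∀ s, K.Adj v s ↔ s = x ∨ s = y ∨ s = u) (hu : ∀ s, K.Adj u s ↔ s = v ∨ s = w)
    (hxy : x ≠ y) (hxu : x ≠ u) (hyu : y ≠ u) (hvw : v ≠ w) {a b p e : Fin (3 * N)}
    (ha : IsFree (isolate (isolate K {u}) {v}) C x a) (hay : a ∉ C y)
    (hb : IsFree (isolate (isolate K {u}) {v}) C y b) (hbx : b ∉ C x)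
    (hpx : p ∉ C x) (hpy : p ∉ C y) (hpw : p ∉ C w)
    (he : IsFree (isolate (isolate K {u}) {v}) C w e) (hea : e ≠ a) (heb : e ≠ b) :
    ∃ C', IsLabelling K N C' ∧ (∀ z, z ≠ v → z ≠ u → C' z = C z) ∧ a ∈ C' v ∧ b ∈ C' v ∧
      p ∈ C' v ∧ p ∈ C' u ∧ e ∈ C' u := by
  have := Fintype.ofFinite V
  have hKuv : K.Adj u v := (hu v).2 (Or.inl rfl)
  have hnbr : ∀ s, (isolate K {u}).Adj v s ↔ s = x ∨ s = y := by
    simp only [isolate_adj, hv, Set.mem_singleton_iff]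
    grind [hKuv.ne]
  have hdeg : (isolate K {u}).degree v ≤ 2 := by
    rw [← SimpleGraph.card_neighborFinset_eq_degree]
    exact (Finset.card_le_card (t := {x, y}) fun s hs => by
      simpa using (hnbr s).1 ((SimpleGraph.mem_neighborFinset _ _ _).1 hs)).trans
        Finset.card_le_two
  have hdeg' : 1 ≤ (isolate K {u}).degree v :=
    (SimpleGraph.degree_pos_iff_exists_adj _ v).2 ⟨x, (hnbr x).2 (Or.inl rfl)⟩
  have hpe : p ≠ e := fun hpe => hpw (hpe ▸ he.1)
  obtain ⟨C₁, h₁, hC₁, hγ, hp, he₁⟩ := h.exists_extension hdeg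
    (γ := fun s => if s = x then a else b) (P := {p}) (Q := {e})
    (by grind) (by grind) (by grind [Finset.disjoint_singleton_left]) (by grind)
    (by simpa using hpe) (by rw [Finset.card_singleton]; omega) (by simpa using hdeg')
  have hpv : p ∈ C₁ v := hp (Finset.mem_singleton_self p)
  have hev : e ∉ C₁ v := Finset.disjoint_singleton_left.1 he₁
  have hax : a ∈ C₁ v := by simpa using hγ x ((hnbr x).2 (Or.inl rfl))
  have hby : b ∈ C₁ v := by simpa [hxy.symm] using hγ y ((hnbr y).2 (Or.inr rfl))
  have heq : ∀ z, z ≠ v → C₁ z = C z := hC₁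
  have hpfree : IsFree (isolate K {u}) C₁ v p := ⟨hpv, fun s hs => by grind [hs.ne]⟩
  have hefree : IsFree (isolate K {u}) C₁ w e := by
    refine ⟨by grind [he.1], fun s hs => ?_⟩
    by_cases hsv : s = v
    · exact hsv ▸ hev
    · rw [heq s hsv]
      exact he.2 s ⟨hs, hvw.symm, hsv⟩
  obtain ⟨C', h', hC', hpu, heu⟩ := h₁.exists_insertion (by omega) (fun s hs => (hu s).1 hs) hvw
    hpfree (by rwa [heq w hvw.symm]) fun _ => ⟨hefree, hev⟩
  refine ⟨C', h', fun z hzv hzu => (hC' z hzu).trans (heq z hzv), ?_, ?_, ?_, hpu hKuv,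
    heu ((hu w).2 (Or.inr rfl))⟩ <;> rwa [hC' v hKuv.ne']

variable {V : Type*} [Fintype V] {N : ℕ} {H K : SimpleGraph V} {C : V → Finset (Fin (3 * N))}

/-- The surroundings of a tiny vertex `v`: its neighbors are `x`, `y` and the `2`-vertex `u`, and
the other neighbor of `u` is `w`. -/
structure IsTinyConfig (H : SimpleGraph V) (v x y u w : V) : Prop where
  isTiny : IsTiny H v
  adj_iff : ∀ s, H.Adj v s ↔ s = x ∨ s = y ∨ s = u
  adj_iff' : ∀ s, H.Adj u s ↔ s = v ∨ s = w
  degree_eq_two : H.degree u = 2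
  degree_ne_two : H.degree x ≠ 2
  degree_ne_two' : H.degree y ≠ 2
  ne : x ≠ y
  ne_v : w ≠ v
  ne_x : w ≠ x
  ne_y : w ≠ y

namespace IsTinyConfig

variable {v x y u w : V}

lemma symm (hc : IsTinyConfig H v x y u w) : IsTinyConfig H v y x u w :=
  ⟨hc.isTiny, fun s => by rw [hc.adj_iff]; tauto, hc.adj_iff', hc.degree_eq_two,
    hc.degree_ne_two', hc.degree_ne_two, hc.ne.symm, hc.ne_v, hc.ne_y, hc.ne_x⟩

lemma adj_x (hc : IsTinyConfig H v x y u w) : H.Adj v x := (hc.adj_iff x).2 (Or.inl rfl)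

lemma adj_u (hc : IsTinyConfig H v x y u w) : H.Adj v u :=
  (hc.adj_iff u).2 (Or.inr (Or.inr rfl))

lemma adj_w (hc : IsTinyConfig H v x y u w) : H.Adj u w := (hc.adj_iff' w).2 (Or.inr rfl)

lemma x_ne_u (hc : IsTinyConfig H v x y u w) : x ≠ u := fun hxu =>
  hc.degree_ne_two (hxu ▸ hc.degree_eq_two)

lemma not_adj_u (hc : IsTinyConfig H v x y u w) : ¬H.Adj u x := by
  rw [hc.adj_iff']
  grind [hc.ne_x, hc.adj_x.ne']

end IsTinyConfig

namespace IsMinimalCounterexample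

variable {v x y u w : V}

lemma exists_isTinyConfig (hM : IsMinimalCounterexample N H) (hv : IsTiny H v) :
    ∃ x y u w, IsTinyConfig H v x y u w := by
  obtain ⟨u, hvu, hu⟩ := hv.exists_twoNbr
  obtain ⟨w, huw, hwv⟩ := exists_adj_ne_of_degree_eq_two hu v
  have hvw := hM.not_adj_of_degree_eq_two hu hvu.symm huw
  obtain ⟨x, y, hxy, hxu⟩ : ∃ x y, x ≠ y ∧ (H.neighborFinset v).erase u = {x, y} := by
    rw [← Finset.card_eq_two, Finset.card_erase_of_mem (by simpa using hvu),
      H.card_neighborFinset_eq_degree, hv.1]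
  have hmem : ∀ s, s ≠ u ∧ H.Adj v s ↔ s = x ∨ s = y := by
    simpa [Finset.ext_iff] using hxu
  have hunique : ∀ s, H.Adj v s → H.degree s = 2 → s = u := fun s hvs hs =>
    Finset.card_le_one.1 hv.2.le s (mem_twoNbrs.2 ⟨hvs, hs⟩) u (mem_twoNbrs.2 ⟨hvu, hu⟩)
  exact ⟨x, y, u, w, hv, by grind, fun s => ⟨eq_or_eq_of_degree_le_two hu.le hvu.symm huw hwv.symm,
    by grind [hvu.symm]⟩, hu, by grind, by grind, hxy, hwv, by grind, by grind⟩

lemma false_of_isTinyConfig (hM : IsMinimalCounterexample N H) (hc : IsTinyConfig H v x y u w)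
    (h : IsLabelling (isolate (isolate H {u}) {v}) N C) {a b p e : Fin (3 * N)}
    (ha : IsFree (isolate (isolate H {u}) {v}) C x a) (hay : a ∉ C y)
    (hb : IsFree (isolate (isolate H {u}) {v}) C y b) (hbx : b ∉ C x)
    (hpx : p ∉ C x) (hpy : p ∉ C y) (hpw : p ∉ C w)
    (he : IsFree (isolate (isolate H {u}) {v}) C w e) (hea : e ≠ a) (heb : e ≠ b) : False := by
  obtain ⟨C', h', -⟩ := h.exists_insertion_pair (by linarith [hM.seven_le]) hc.adj_iff hc.adj_iff'
    hc.ne hc.x_ne_u hc.symm.x_ne_u hc.ne_v.symm ha hay hb hbx hpx hpy hpw he hea heb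
  exact hM.not_isLabelling C' h'

lemma exists_isLabelling_of_degree_le_three (hM : IsMinimalCounterexample N H)
    (hc : IsTinyConfig H v x y u w) (hw : H.degree w ≤ 3) :
    ∃ (C : V → Finset (Fin (3 * N))) (p : Fin (3 * N)), IsLabelling (isolate H {u}) N C ∧
      p ∉ C x ∧ p ∉ C y ∧ p ∉ C w := by
  have hN := hM.seven_le
  obtain ⟨C, h⟩ := hM.exists_isLabelling u (by have := hc.degree_eq_two; omega)
  have hcard := add_card_inter_eq_card_compl_union (h.card_eq x) (h.card_eq y)
  have hw' := degree_isolate_lt hc.adj_w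
  by_cases hsub : (C x ∪ C y)ᶜ ⊆ C w
  · have heq : (C x ∪ C y)ᶜ = C w :=
      Finset.eq_of_subset_of_card_le hsub (by rw [h.card_eq]; omega)
    obtain ⟨g, hg⟩ := h.exists_isFree (v := w) (by omega)
    obtain ⟨C', h', -, hgw, hC', -⟩ :=
      h.exists_removal_of_degree_le_two (by omega) (by omega) hg g
    have hgxy : g ∉ C x ∧ g ∉ C y := by simpa [← heq] using hg.1
    exact ⟨C', g, h', by rw [hC' x hc.ne_x.symm]; exact hgxy.1,
      by rw [hC' y hc.ne_y.symm]; exact hgxy.2, hgw⟩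
  · obtain ⟨p, hp, hpw⟩ := Finset.not_subset.1 hsub
    have hpxy : p ∉ C x ∧ p ∉ C y := by simpa using hp
    exact ⟨C, p, h, hpxy.1, hpxy.2, hpw⟩

lemma four_le_degree_of_isTinyConfig (hM : IsMinimalCounterexample N H)
    (hc : IsTinyConfig H v x y u w) : 4 ≤ H.degree w := by
  by_contra hw
  have hN := hM.seven_le
  obtain ⟨C, p, h, hpx, hpy, hpw⟩ :=
    hM.exists_isLabelling_of_degree_le_three hc (by omega)
  have hadj : ∀ s, H.Adj v s → s ≠ u → (isolate H {u}).Adj s v := fun s hs hsu =>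
    ⟨hs.symm, hsu, hc.adj_u.ne⟩
  have hxv := hadj x hc.adj_x hc.x_ne_u
  have hyv := hadj y hc.symm.adj_x hc.symm.x_ne_u
  obtain ⟨a, hax, hav⟩ := h.exists_common hxv
  obtain ⟨b, hby, hbv⟩ := h.exists_common hyv
  have hw' := degree_isolate_lt hc.adj_w
  obtain ⟨e, he, hee⟩ := h.exists_isFree_notMem (v := w) (F := {a, b}) (by
    have := Finset.card_le_two (a := a) (b := b)
    omega)
  have hee : e ≠ a ∧ e ≠ b := by simpa using hee
  exact hM.false_of_isTinyConfig hc (h.mono (isolate_le _ _)) (h.isFree_isolate hxv hax hav)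
    (h.notMem hxv.symm hyv.symm hc.ne hav hax) (h.isFree_isolate hyv hby hbv)
    (h.notMem hyv.symm hxv.symm hc.ne.symm hbv hby) hpx hpy hpw
    (he.mono (isolate_le _ _)) hee.1 hee.2

lemma not_isLight_of_isTinyConfig (hM : IsMinimalCounterexample N H)
    (hc : IsTinyConfig H v x y u w) : ¬IsLight H w := fun hw =>
  absurd hw.degree_le (by have := hM.four_le_degree_of_isTinyConfig hc; omega)

lemma not_isPoor_of_isTinyConfig (hM : IsMinimalCounterexample N H)
    (hc : IsTinyConfig H v x y u w) : ¬IsPoor H w := fun hw => by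
  have hv := hM.degree_eq_of_isPoorLink ⟨hc.adj_u, hc.degree_eq_two, w, hc.ne_v, hc.adj_w, hw⟩
  have := hc.isTiny.1
  have := hM.seven_le
  omega

end IsMinimalCounterexample

end TinyConfig

section SmallNeighbors

variable {V : Type*} [Fintype V] {N : ℕ} {H K : SimpleGraph V} {C : V → Finset (Fin (3 * N))}

lemma IsMovable.not_isUsed {x : V} {c : Fin (3 * N)} (hc : IsMovable H K C x c) :
    ¬IsUsed K C x c := fun ⟨hcx, s, hxs, hcs⟩ => (hc s hxs hcs).2 ⟨hcs, x, hxs.symm, hcx⟩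

lemma IsSmall.degree_le {x : V} (hx : IsSmall H x) : H.degree x ≤ 5 := by
  unfold IsSmall at hx
  omega

lemma IsSmall.three_le_degree {x : V} (hx : IsSmall H x) : 3 ≤ H.degree x := by
  unfold IsSmall at hx
  omega

namespace IsLabelling

lemma three_mul_le_card_isMovable_add (h : IsLabelling K N C) (hK : K ≤ H) (x : V) :
    3 * N ≤ ({c | IsMovable H K C x c} : Finset (Fin (3 * N))).card +
      ({s ∈ K.neighborFinset x | ¬IsLight H s} : Finset V).card * N +
      ({s ∈ K.neighborFinset x | IsLight H s} : Finset V).card * 3 := by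
  set heavy : Finset V := {s ∈ K.neighborFinset x | ¬IsLight H s}
  set light : Finset V := {s ∈ K.neighborFinset x | IsLight H s}
  have hcover : (Finset.univ : Finset (Fin (3 * N))) ⊆
      ({c | IsMovable H K C x c} : Finset (Fin (3 * N))) ∪ heavy.biUnion C ∪
        light.biUnion (fun s => {c ∈ C s | IsUsed K C s c}) := by
    intro c _
    simp [heavy, light, IsMovable]
    grind
  have hcard := Finset.card_le_card hcover
  rw [Finset.card_univ, Fintype.card_fin] at hcard
  have hheavy := Finset.card_biUnion_le_card_mul heavy C N fun s _ => (h.card_eq s).le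
  have hlight := Finset.card_biUnion_le_card_mul light
    (fun s => {c ∈ C s | IsUsed K C s c}) 3 fun s hs => (h.card_isUsed s).le.trans
      ((degree_le_of_le hK s).trans (Finset.mem_filter.1 hs).2.degree_le)
  refine hcard.trans ((Finset.card_union_le _ _).trans (add_le_add ?_ hlight))
  exact (Finset.card_union_le _ _).trans (Nat.add_le_add_left hheavy _)

lemma le_card_isMovable (h : IsLabelling K N C) (hN : 6 ≤ N) (hK : K ≤ H) {x : V}
    (hx : IsSmall H x) (hdeg : K.degree x < H.degree x) :
    N ≤ ({c | IsMovable H K C x c} : Finset (Fin (3 * N))).card := by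
  have hmov := h.three_mul_le_card_isMovable_add hK x
  have hsum := Finset.card_filter_add_card_filter_not (s := K.neighborFinset x)
    (fun s => IsLight H s)
  have hheavy : ({s ∈ K.neighborFinset x | ¬IsLight H s} : Finset V).card ≤
      (heavyNbrs H x).card := Finset.card_le_card fun s => by
    simp only [Finset.mem_filter, SimpleGraph.mem_neighborFinset, mem_heavyNbrs]
    exact fun ⟨hxs, hs⟩ => ⟨hK hxs, hs⟩
  rw [K.card_neighborFinset_eq_degree] at hsum
  generalize ({s ∈ K.neighborFinset x | ¬IsLight H s} : Finset V).card = r at *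
  unfold IsSmall at hx
  obtain rfl | rfl | rfl : r = 0 ∨ r = 1 ∨ r = 2 := by omega
  all_goals omega

lemma exists_relabelling_pair (h : IsLabelling K N C) (hN : 2 ≤ N) (hK : K ≤ H) {x y : V}
    (hxy : x ≠ y) (hnadj : ¬K.Adj y x) (hx : H.degree x ≠ 2) (hy : H.degree y ≠ 2)
    {S T : Finset (Fin (3 * N))} (hS : S.card = N) (hT : T.card = N)
    (hSused : ∀ c, IsUsed K C x c → c ∈ S) (hTused : ∀ c, IsUsed K C y c → c ∈ T)
    (hSmov : ∀ c ∈ S, IsUsed K C x c ∨ IsMovable H K C x c)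
    (hTmov : ∀ c ∈ T, IsUsed K C y c ∨ IsMovable H K C y c) :
    ∃ C', IsLabelling K N C' ∧ SameEdgeColors K C C' ∧ C' x = S ∧ C' y = T ∧
      ∀ r, r ≠ x → r ≠ y → ¬IsLight H r → C' r = C r := by
  obtain ⟨C₁, h₁, hs₁, hx₁, hC₁⟩ := h.exists_relabelling hN hK hx hS hSused hSmov
  have hC₁' : ∀ r, r ≠ x → C₁ r ≠ C r → IsLight H r := fun r hrx hr => by
    obtain ⟨t, -, ht, hrt⟩ := hC₁ r hrx hr
    exact ht.of_mem_cluster hrt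
  obtain ⟨C₂, h₂, hs₂, hy₂, hC₂⟩ := h₁.exists_relabelling hN hK hy hT
    (fun c hc => hTused c (hs₁.isUsed_iff.2 hc))
    (fun c hc => (hTmov c hc).imp hs₁.isUsed_iff.1 fun hm => hm.of_sameEdgeColors hs₁
      fun r hyr => hC₁' r (by rintro rfl; exact hnadj hyr))
  refine ⟨C₂, h₂, hs₁.trans hs₂, ?_, hy₂, fun r hrx hry hr => ?_⟩
  · by_contra hne
    obtain ⟨t, hyt, -, rfl | ⟨-, -, hx2⟩⟩ := hC₂ x hxy (hx₁ ▸ hne)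
    · exact hnadj hyt
    · exact hx hx2
  · have hr₂ : C₂ r = C₁ r := by
      by_contra hne
      obtain ⟨t, -, ht, hrt⟩ := hC₂ r hry hne
      exact hr (ht.of_mem_cluster hrt)
    exact hr₂.trans (not_not.1 fun hne => hr (hC₁' r hrx hne))

end IsLabelling

lemma exists_superset_of_disjoint {S U F : Finset (Fin (3 * N))} {a : Fin (3 * N)}
    (hSU : Disjoint S U) (ha : a ∈ U) (haF : a ∉ F) (hFS : Disjoint F S) (hS : S.card < N)
    (hU : N ≤ U.card) (hF : F.card ≤ S.card) :
    ∃ T, a ∈ T ∧ S ⊆ T ∧ T ⊆ S ∪ U ∧ Disjoint F T ∧ T.card = N := by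
  obtain ⟨T, haT, hT, hcard⟩ : ∃ T, insert a S ⊆ T ∧ T ⊆ S ∪ U \ F ∧ T.card = N := by
    refine Finset.exists_subsuperset_card_eq (by grind) ?_ ?_
    · exact (Finset.card_insert_le a S).trans hS
    · rw [Finset.card_union_of_disjoint (hSU.mono_right Finset.sdiff_subset)]
      have := Finset.le_card_sdiff F U
      omega
  refine ⟨T, haT (by simp), fun c hc => haT (by simp [hc]), fun c hc => by grind, ?_, hcard⟩
  rw [Finset.disjoint_left] at *
  grind

lemma exists_target_pair {S S' U U' W : Finset (Fin (3 * N))} (hN : 7 ≤ N)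
    (hSU : Disjoint S U) (hSU' : Disjoint S' U') (hS : 2 ≤ S.card) (hS' : 2 ≤ S'.card)
    (hS4 : S.card ≤ 4) (hS4' : S'.card ≤ 4) (hU : N ≤ U.card) (hU' : N ≤ U'.card)
    (hW : W.card ≤ N) (e : Fin (3 * N)) :
    ∃ T T' a b p, S ⊆ T ∧ T ⊆ S ∪ U ∧ T.card = N ∧ S' ⊆ T' ∧ T' ⊆ S' ∪ U' ∧ T'.card = N ∧
      a ∈ U ∧ a ∈ T ∧ a ∉ T' ∧ e ≠ a ∧ b ∈ U' ∧ b ∈ T' ∧ b ∉ T ∧ e ≠ b ∧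
      p ∉ T ∧ p ∉ T' ∧ p ∉ W := by
  obtain ⟨a, haU, ha⟩ : ∃ a ∈ U, a ∉ insert e S' := by
    apply Finset.exists_mem_notMem_of_card_lt_card
    have := Finset.card_insert_le e S'
    omega
  obtain ⟨b, hbU, hb⟩ : ∃ b ∈ U', b ∉ insert a (insert e S) := by
    apply Finset.exists_mem_notMem_of_card_lt_card
    have := Finset.card_insert_le e S
    have := Finset.card_insert_le a (insert e S)
    omega
  obtain ⟨T, haT, hST, hTS, hbT, hT⟩ := exists_superset_of_disjoint (F := {b}) hSU haU (by grind)
    (by grind [Finset.disjoint_singleton_left]) (by omega) hU (by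
      rw [Finset.card_singleton]
      omega)
  obtain ⟨p, hp⟩ := exists_notMem_of_card_lt (F := T ∪ W ∪ insert b S') (by
    have := Finset.card_union_le (T ∪ W) (insert b S')
    have := Finset.card_union_le T W
    have := Finset.card_insert_le b S'
    omega)
  obtain ⟨T', hbT', hST', hTS', hapT', hT'⟩ :=
    exists_superset_of_disjoint (F := {a, p}) hSU' hbU (by grind)
      (by grind [Finset.disjoint_singleton_left]) (by omega) hU'
      (Finset.card_le_two.trans hS')
  rw [Finset.disjoint_insert_left, Finset.disjoint_singleton_left] at hapT'
  rw [Finset.disjoint_singleton_left] at hbT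
  exact ⟨T, T', a, b, p, by grind⟩

lemma IsLabelling.exists_isFree_pair (h : IsLabelling K N C) (hN : 7 ≤ N) (hK : K ≤ H) {x y : V}
    (hxy : x ≠ y) (hnadj : ¬K.Adj y x) (hx : IsSmall H x) (hy : IsSmall H y)
    (hdx : K.degree x < H.degree x) (hdy : K.degree y < H.degree y) (hdx' : 2 ≤ K.degree x)
    (hdy' : 2 ≤ K.degree y) (hx2 : H.degree x ≠ 2) (hy2 : H.degree y ≠ 2) (e : Fin (3 * N))
    (w : V) :
    ∃ C' a b p, IsLabelling K N C' ∧ SameEdgeColors K C C' ∧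
      (∀ r, r ≠ x → r ≠ y → ¬IsLight H r → C' r = C r) ∧
      IsFree K C' x a ∧ a ∉ C' y ∧ e ≠ a ∧ IsFree K C' y b ∧ b ∉ C' x ∧ e ≠ b ∧
      p ∉ C' x ∧ p ∉ C' y ∧ p ∉ C w := by
  have hmem : ∀ s c, c ∈ ({c | IsMovable H K C s c} : Finset (Fin (3 * N))) ↔
      IsMovable H K C s c := by simp
  have hmem' : ∀ s c, c ∈ ({c ∈ C s | IsUsed K C s c} : Finset (Fin (3 * N))) ↔
      IsUsed K C s c := fun s c => by
    rw [Finset.mem_filter]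
    exact and_iff_right_of_imp (·.1)
  have hdisj : ∀ s, Disjoint ({c ∈ C s | IsUsed K C s c} : Finset (Fin (3 * N)))
      ({c | IsMovable H K C s c} : Finset (Fin (3 * N))) := fun s => by
    rw [Finset.disjoint_left]
    exact fun c hc hc' => ((hmem s c).1 hc').not_isUsed ((hmem' s c).1 hc)
  obtain ⟨S, T, a, b, p, hS, hS', hScard, hT, hT', hTcard, haU, haS, haT, hea, hbU, hbT, hbS, heb,
    hpS, hpT, hpw⟩ := exists_target_pair hN (hdisj x) (hdisj y) (by rwa [h.card_isUsed])
      (by rwa [h.card_isUsed]) (by rw [h.card_isUsed]; linarith [hx.degree_le])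
      (by rw [h.card_isUsed]; linarith [hy.degree_le])
      (h.le_card_isMovable (by omega) hK hx hdx) (h.le_card_isMovable (by omega) hK hy hdy)
      (h.card_eq w).le e
  obtain ⟨C', h', hs', rfl, rfl, hC'⟩ := h.exists_relabelling_pair (by omega) hK hxy hnadj hx2 hy2
    hScard hTcard (fun c hc => hS ((hmem' x c).2 hc)) (fun c hc => hT ((hmem' y c).2 hc))
    (fun c hc => by simpa only [Finset.mem_union, hmem, hmem'] using hS' hc)
    (fun c hc => by simpa only [Finset.mem_union, hmem, hmem'] using hT' hc)
  have hfree : ∀ s c, IsMovable H K C s c → c ∈ C' s → IsFree K C' s c := fun s c hc hcs =>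
    (not_isUsed_iff_isFree hcs).1 fun hused => hc.not_isUsed (hs'.isUsed_iff.2 hused)
  exact ⟨C', a, b, p, h', hs', hC', hfree x a ((hmem x a).1 haU) haS, haT, hea,
    hfree y b ((hmem y b).1 hbU) hbT, hbS, heb, hpS, hpT, hpw⟩

lemma IsTinyConfig.degree_le_degree_isolate_add_one {v x y u w : V}
    (hc : IsTinyConfig H v x y u w) :
    H.degree x ≤ (isolate (isolate H {u}) {v}).degree x + 1 := by
  have hsub : H.neighborFinset x ⊆
      insert v ((isolate (isolate H {u}) {v}).neighborFinset x) := fun s hs => by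
    rw [SimpleGraph.mem_neighborFinset] at hs
    rw [Finset.mem_insert, SimpleGraph.mem_neighborFinset, or_iff_not_imp_left]
    exact fun hsv => ⟨⟨hs, hc.x_ne_u, fun hsu => hc.not_adj_u (hsu ▸ hs.symm)⟩, hc.adj_x.ne', hsv⟩
  simpa using (Finset.card_le_card hsub).trans (Finset.card_insert_le _ _)

namespace IsMinimalCounterexample

variable {v x y u w : V}

lemma exists_isLabelling_isolate_isolate (hM : IsMinimalCounterexample N H)
    (hc : IsTinyConfig H v x y u w) :
    ∃ (C : V → Finset (Fin (3 * N))) (e : Fin (3 * N)),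
      IsLabelling (isolate (isolate H {u}) {v}) N C ∧
        IsFree (isolate (isolate H {u}) {v}) C w e := by
  obtain ⟨C, h⟩ := hM.exists_isLabelling u (by have := hc.degree_eq_two; omega)
  obtain ⟨e, he⟩ := h.exists_isFree ((degree_isolate_lt hc.adj_w).trans_le (hM.degree_le w))
  exact ⟨C, e, h.mono (isolate_le _ _), he.mono (isolate_le _ _)⟩

lemma not_adj_of_degree_le_five (hM : IsMinimalCounterexample N H)
    (hc : IsTinyConfig H v x y u w) (hx : H.degree x ≤ 5) (hy : H.degree y ≤ 5) :
    ¬H.Adj x y := fun hxy => by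
  have hN := hM.seven_le
  obtain ⟨C, e, h, he⟩ := hM.exists_isLabelling_isolate_isolate hc
  have hK : isolate (isolate H {u}) {v} ≤ H := (isolate_le _ _).trans (isolate_le _ _)
  have hKxy : (isolate (isolate H {u}) {v}).Adj x y :=
    ⟨⟨hxy, hc.x_ne_u, hc.symm.x_ne_u⟩, hc.adj_x.ne', hc.symm.adj_x.ne'⟩
  have hfree : ∀ s, H.degree s ≤ 5 → ∃ c, IsFree (isolate (isolate H {u}) {v}) C s c ∧ c ≠ e := by
    intro s hs
    have hKs := degree_le_of_le hK s
    simpa using h.exists_isFree_notMem (v := s) (F := {e}) (by rw [Finset.card_singleton]; omega)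
  obtain ⟨a, ha, hae⟩ := hfree x hx
  obtain ⟨b, hb, hbe⟩ := hfree y hy
  obtain ⟨p, hp, hpw⟩ : ∃ p ∈ (C x ∪ C y)ᶜ, p ∉ C w := by
    apply Finset.exists_mem_notMem_of_card_lt_card
    rw [← add_card_inter_eq_card_compl_union (h.card_eq x) (h.card_eq y), h.card_inter hKxy,
      h.card_eq]
    omega
  have hpxy : p ∉ C x ∧ p ∉ C y := by simpa using hp
  exact hM.false_of_isTinyConfig hc h ha (ha.2 y hKxy) hb (hb.2 x hKxy.symm) hpxy.1 hpxy.2 hpw he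
    hae.symm hbe.symm

lemma adj_of_isSmall (hM : IsMinimalCounterexample N H) (hc : IsTinyConfig H v x y u w)
    (hx : IsSmall H x) (hy : IsSmall H y) : H.Adj x y := by
  by_contra hxy
  have hK : isolate (isolate H {u}) {v} ≤ H := (isolate_le _ _).trans (isolate_le _ _)
  obtain ⟨C, e, h, he⟩ := hM.exists_isLabelling_isolate_isolate hc
  have hdeg : ∀ s, H.Adj v s → (isolate (isolate H {u}) {v}).degree s < H.degree s := fun s hs =>
    degree_lt_of_not_adj hK hs.symm fun hKs => hKs.2.2 rfl
  obtain ⟨C', a, b, p, h', hs', hC', ha, hay, hea, hb, hbx, heb, hpx, hpy, hpw⟩ :=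
    h.exists_isFree_pair hM.seven_le hK hc.ne (fun hyx => hxy (hK hyx).symm) hx hy
      (hdeg x hc.adj_x) (hdeg y hc.symm.adj_x)
      (by linarith [hc.degree_le_degree_isolate_add_one, hx.three_le_degree])
      (by linarith [hc.symm.degree_le_degree_isolate_add_one, hy.three_le_degree])
      hc.degree_ne_two hc.degree_ne_two' e w
  have hw' : C' w = C w := hC' w hc.ne_x hc.ne_y (hM.not_isLight_of_isTinyConfig hc)
  exact hM.false_of_isTinyConfig hc h' ha hay hb hbx hpx hpy (hw' ▸ hpw)
    (hs'.isFree he (hw' ▸ he.1)) hea heb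

lemma not_isSmall_of_isSmall (hM : IsMinimalCounterexample N H) (hc : IsTinyConfig H v x y u w)
    (hx : IsSmall H x) : ¬IsSmall H y := fun hy =>
  hM.not_adj_of_degree_le_five hc hx.degree_le hy.degree_le (hM.adj_of_isSmall hc hx hy)

end IsMinimalCounterexample

end SmallNeighbors

section Hubs

variable {V : Type*} [Fintype V] {N : ℕ} {H K : SimpleGraph V} {C : V → Finset (Fin (3 * N))}
  {v x y u w z : V} {a b d e : Fin (3 * N)}

lemma IsPoorLink.isFree_of_sameEdgeColors {C' : V → Finset (Fin (3 * N))} (hz : IsPoorLink H x z)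
    (hK : K ≤ H) (hwx : w ≠ x) (hw : ¬IsPoor H w) (hw2 : H.degree w ≠ 2)
    (hs : SameEdgeColors (trim H (isolate K {z}) {s | IsPoor H s}) C C') (hCw : C' w = C w)
    {c : Fin (3 * N)} (hc : IsFree (isolate K {z}) C w c) : IsFree K C' w c := by
  have hfree := hs.isFree (hc.mono (trim_le H _ _)) (hCw ▸ hc.1)
  have hwz : w ≠ z := fun hwz => hw2 (hwz ▸ hz.2.1)
  refine ⟨hfree.1, fun s hws => hfree.2 s ⟨⟨hws, hwz, ?_⟩, fun hw' => absurd hw' hw, fun _ => hw2⟩⟩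
  rintro rfl
  exact hw (hz.isPoor_of_adj (hK hws.symm) hwx)

namespace IsHub

lemma not_isLight (hx : IsHub N H x) (hN : 7 ≤ N) : ¬IsLight H x := fun h => by
  have := h.degree_le
  have := hx.degree_eq
  omega

lemma not_isPoor (hx : IsHub N H x) (hN : 7 ≤ N) : ¬IsPoor H x := fun h => by
  have := h.degree_le
  have := hx.degree_eq
  omega

lemma four_le_card_poorLinks (hx : IsHub N H x) (hN : 7 ≤ N) : 4 ≤ (poorLinks H x).card := by
  have := card_heavyNbrs_add_card_tinyNbrs_add_card_twoNbrs (H := H) x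
  have := Finset.card_le_card hx.twoNbrs_subset
  have := hx.degree_eq
  have := hx.card_heavyNbrs
  have := hx.card_tinyNbrs
  omega

lemma eq_of_isLight (hx : IsHub N H x) (hxv : H.Adj x v) (hv : IsTiny H v) {t : V}
    (hxt : H.Adj x t) (ht : IsLight H t) (hlink : ¬IsPoorLink H x t) : t = v := by
  obtain ht | ht := ht
  · exact absurd (mem_poorLinks.1 (hx.twoNbrs_subset (mem_twoNbrs.2 ⟨hxt, ht⟩))) hlink
  · exact Finset.card_le_one.1 hx.card_tinyNbrs.le t (mem_tinyNbrs.2 ⟨hxt, ht⟩) v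
      (mem_tinyNbrs.2 ⟨hxv, hv⟩)

end IsHub

namespace IsTinyConfig

lemma not_isPoor (hc : IsTinyConfig H v x y u w) : ¬IsPoor H v := fun hv => by
  have := hc.isTiny.1
  have := hc.isTiny.2
  unfold IsPoor at hv
  omega

lemma ne_of_degree_eq_two (hc : IsTinyConfig H v x y u w) (hz : H.degree z = 2) : v ≠ z := by
  rintro rfl
  have := hc.isTiny.1
  omega

lemma adj_iff_of_le (hc : IsTinyConfig H v x y u w) (hK : K ≤ H) (hx : K.Adj v x)
    (hy : K.Adj v y) (hu : K.Adj v u) (s : V) : K.Adj v s ↔ s = x ∨ s = y ∨ s = u := by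
  refine ⟨fun hs => (hc.adj_iff s).1 (hK hs), ?_⟩
  rintro (rfl | rfl | rfl) <;> assumption

lemma adj_iff_of_le' (hc : IsTinyConfig H v x y u w) (hK : K ≤ H) (hv : K.Adj v u)
    (hw : K.Adj u w) (s : V) : K.Adj u s ↔ s = v ∨ s = w := by
  refine ⟨fun hs => (hc.adj_iff' s).1 (hK hs), ?_⟩
  rintro (rfl | rfl)
  exacts [hv.symm, hw]

lemma not_isPoor_two (hc : IsTinyConfig H v x y u w) (hw : H.degree w ≠ 2) : ¬IsPoor H u := by
  have htwo : twoNbrs H u = ∅ := Finset.eq_empty_of_forall_notMem fun s hs => by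
    rw [mem_twoNbrs, hc.adj_iff'] at hs
    obtain ⟨rfl | rfl, hs⟩ := hs
    exacts [hc.ne_of_degree_eq_two hs rfl, hw hs]
  have := hc.degree_eq_two
  simp only [IsPoor, htwo, Finset.card_empty]
  omega

end IsTinyConfig

namespace IsMinimalCounterexample

lemma isUsed_of_isHub (hM : IsMinimalCounterexample N H) (hx : IsHub N H x) (hxv : H.Adj x v)
    (hv : IsTiny H v) (hz : IsPoorLink H x z) (h : IsLabelling (isolate H {z}) N C)
    {f : Fin (3 * N)} (hfx : f ∉ C x) (hfr : ∀ r, H.Adj x r → ¬IsLight H r → f ∉ C r) :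
    IsUsed (isolate H {z}) C v f := by
  obtain ⟨t, hxt, ht, hlink, hused⟩ := hM.exists_isUsed_of_isPoorLink hz h hfx hfr
  rwa [hx.eq_of_isLight hxv hv hxt ht hlink] at hused

lemma degree_ne_two_of_isTinyConfig (hM : IsMinimalCounterexample N H)
    (hc : IsTinyConfig H v x y u w) : H.degree w ≠ 2 := by
  have := hM.four_le_degree_of_isTinyConfig hc
  omega

lemma exists_swap_of_isHub (hM : IsMinimalCounterexample N H) (hc : IsTinyConfig H v x y u w)
    (hx : IsHub N H x) (hz : IsPoorLink H x z) (h : IsLabelling (isolate (isolate H {u}) {z}) N C)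
    {q f : Fin (3 * N)} (hq : IsFree (isolate (isolate H {u}) {z}) C x q) (hfx : f ∉ C x)
    (hfr : ∀ r, H.Adj x r → ¬IsLight H r → f ∉ C r)
    (hfv : ¬IsUsed (isolate (isolate H {u}) {z}) C v f)
    (hfz : ∀ s r, H.Adj z s → s ≠ x → H.Adj s r → s ≠ u → r ≠ u → f ∈ C s → f ∈ C r →
      H.degree r = 2) :
    ∃ C', IsLabelling (isolate H {u}) N C' ∧
      SameEdgeColors (trim H (isolate (isolate H {u}) {z}) {s | IsPoor H s}) C C' ∧
      C' x = insert f ((C x).erase q) ∧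
      ∀ s, s ≠ x → ¬IsLight H s → ¬IsPoor H s → C' s = C s := by
  have hu := hc.not_isPoor_two (hM.degree_ne_two_of_isTinyConfig hc)
  have hzu : z ≠ u := fun hzu => hc.not_adj_u (hzu ▸ hz.1.symm)
  refine hM.exists_swap_of_isPoorLink (isolate_le H {u}) h hz ⟨hz.1, hc.x_ne_u, hzu⟩ ?_ hq hfx ?_
    fun s r hzs hsx hsr hfs hfr' => hfz s r hzs hsx hsr.1 hsr.2.1 hsr.2.2 hfs hfr'
  · intro t hxt hKxt s hts
    refine ⟨hts, hKxt.2.2, ?_⟩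
    rintro rfl
    exact hu (hxt.isPoor_of_adj hts hc.x_ne_u.symm)
  · intro r hxr hlink hr
    have hlight : IsLight H r := by_contra fun hlight => hfr r hxr.1 hlight hr
    rw [hx.eq_of_isLight hc.adj_x.symm hc.isTiny hxr.1 hlight hlink]
    exact ⟨Or.inr hc.isTiny, hfv⟩

end IsMinimalCounterexample

end Hubs

section HubConfig

variable {V : Type*} [Fintype V] {N : ℕ} {H K : SimpleGraph V} {C : V → Finset (Fin (3 * N))}
  {v x y u w z : V} {a b d e : Fin (3 * N)}

/-- The surroundings of a tiny vertex `v` with a hub `x` among its neighbors, together with a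
labelling in which a poor link `z` of `x` is isolated. The colors of the edges `vx`, `vy`, `vu`
and `uw` are `a`, `b`, `d` and `e`. -/
structure IsHubConfig (N : ℕ) (H : SimpleGraph V) (v x y u w z : V) (C : V → Finset (Fin (3 * N)))
    (a b d e : Fin (3 * N)) : Prop extends IsTinyConfig H v x y u w where
  isHub : IsHub N H x
  isPoorLink : IsPoorLink H x z
  isLabelling : IsLabelling (isolate H {z}) N C
  color_x : a ∈ C v ∧ a ∈ C x
  color_y : b ∈ C v ∧ b ∈ C y
  color_u : d ∈ C v ∧ d ∈ C u
  color_w : e ∈ C u ∧ e ∈ C w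
  w_ne : w ≠ z

namespace IsHubConfig

lemma v_ne (hk : IsHubConfig N H v x y u w z C a b d e) : v ≠ z :=
  hk.ne_of_degree_eq_two hk.isPoorLink.2.1

lemma x_ne (hk : IsHubConfig N H v x y u w z C a b d e) : x ≠ z := fun hxz =>
  hk.degree_ne_two (hxz ▸ hk.isPoorLink.2.1)

lemma y_ne (hk : IsHubConfig N H v x y u w z C a b d e) : y ≠ z := fun hyz =>
  hk.degree_ne_two' (hyz ▸ hk.isPoorLink.2.1)

lemma u_ne (hk : IsHubConfig N H v x y u w z C a b d e) : u ≠ z := fun huz =>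
  hk.not_adj_u (huz ▸ hk.isPoorLink.1.symm)

lemma adj_vx (hk : IsHubConfig N H v x y u w z C a b d e) : (isolate H {z}).Adj v x :=
  ⟨hk.adj_x, hk.v_ne, hk.x_ne⟩

lemma adj_vy (hk : IsHubConfig N H v x y u w z C a b d e) : (isolate H {z}).Adj v y :=
  ⟨hk.symm.adj_x, hk.v_ne, hk.y_ne⟩

lemma adj_vu (hk : IsHubConfig N H v x y u w z C a b d e) : (isolate H {z}).Adj v u :=
  ⟨hk.adj_u, hk.v_ne, hk.u_ne⟩

lemma adj_uw (hk : IsHubConfig N H v x y u w z C a b d e) : (isolate H {z}).Adj u w :=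
  ⟨hk.adj_w, hk.u_ne, hk.w_ne⟩

lemma b_notMem_x (hk : IsHubConfig N H v x y u w z C a b d e) : b ∉ C x :=
  hk.isLabelling.notMem hk.adj_vy hk.adj_vx hk.ne.symm hk.color_y.1 hk.color_y.2

lemma a_notMem_y (hk : IsHubConfig N H v x y u w z C a b d e) : a ∉ C y :=
  hk.isLabelling.notMem hk.adj_vx hk.adj_vy hk.ne hk.color_x.1 hk.color_x.2

lemma d_notMem_x (hk : IsHubConfig N H v x y u w z C a b d e) : d ∉ C x :=
  hk.isLabelling.notMem hk.adj_vu hk.adj_vx hk.x_ne_u.symm hk.color_u.1 hk.color_u.2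

lemma d_notMem_y (hk : IsHubConfig N H v x y u w z C a b d e) : d ∉ C y :=
  hk.isLabelling.notMem hk.adj_vu hk.adj_vy hk.symm.x_ne_u.symm hk.color_u.1 hk.color_u.2

lemma d_notMem_w (hk : IsHubConfig N H v x y u w z C a b d e) : d ∉ C w :=
  hk.isLabelling.notMem hk.adj_vu.symm hk.adj_uw hk.ne_v.symm hk.color_u.2 hk.color_u.1

lemma e_ne_a (hk : IsHubConfig N H v x y u w z C a b d e) : e ≠ a := fun hea =>
  hk.isLabelling.notMem hk.adj_vx hk.adj_vu hk.x_ne_u hk.color_x.1 hk.color_x.2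
    (hea ▸ hk.color_w.1)

lemma e_ne_b (hk : IsHubConfig N H v x y u w z C a b d e) : e ≠ b := fun heb =>
  hk.isLabelling.notMem hk.adj_vy hk.adj_vu hk.symm.x_ne_u hk.color_y.1 hk.color_y.2
    (heb ▸ hk.color_w.1)

lemma isFree_y (hk : IsHubConfig N H v x y u w z C a b d e) :
    IsFree (isolate (isolate H {z}) {v}) C y b :=
  hk.isLabelling.isFree_isolate hk.adj_vy.symm hk.color_y.2 hk.color_y.1

lemma isFree_w (hk : IsHubConfig N H v x y u w z C a b d e) :
    IsFree (isolate (isolate H {z}) {u}) C w e :=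
  hk.isLabelling.isFree_isolate hk.adj_uw.symm hk.color_w.2 hk.color_w.1

lemma exists_reinsertion (hk : IsHubConfig N H v x y u w z C a b d e) (hN : 3 ≤ N)
    (hK : K ≤ isolate H {z}) (hvx : K.Adj v x) (hvy : K.Adj v y) (hvu : K.Adj v u)
    (huw : K.Adj u w) {c p : Fin (3 * N)} (hc : IsFree (isolate (isolate K {u}) {v}) C y c)
    (hcx : c ∉ C x) (hec : e ≠ c) (hpx : p ∉ C x) (hpy : p ∉ C y) (hpw : p ∉ C w) :
    ∃ C', IsLabelling K N C' ∧ (∀ s, s ≠ v → s ≠ u → C' s = C s) ∧ c ∈ C' v ∧ p ∈ C' v ∧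
      p ∈ C' u := by
  have hKH : K ≤ H := hK.trans (isolate_le H _)
  have hle := (isolate_le K {u}).trans hK
  obtain ⟨C', h', hC', -, hcv, hpv, hpu, -⟩ := IsLabelling.exists_insertion_pair
    (hk.isLabelling.mono ((isolate_le _ {v}).trans hle)) hN (hk.adj_iff_of_le hKH hvx hvy hvu)
    (hk.adj_iff_of_le' hKH hvu huw) hk.ne hk.x_ne_u hk.symm.x_ne_u hk.ne_v.symm
    ((hk.isLabelling.isFree_isolate hk.adj_vx.symm hk.color_x.2 hk.color_x.1).mono
      (isolate_mono hle le_rfl)) hk.a_notMem_y hc hcx hpx hpy hpw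
    (hk.isFree_w.mono ((isolate_le _ {v}).trans (isolate_mono hK le_rfl))) hk.e_ne_a hec
  exact ⟨C', h', hC', hcv, hpv, hpu⟩

lemma exists_reinsertion_isolate (hk : IsHubConfig N H v x y u w z C a b d e) (hN : 3 ≤ N)
    {c p : Fin (3 * N)} (hc : IsFree (isolate (isolate (isolate H {z}) {u}) {v}) C y c)
    (hcx : c ∉ C x) (hec : e ≠ c) (hpx : p ∉ C x) (hpy : p ∉ C y) (hpw : p ∉ C w) :
    ∃ C', IsLabelling (isolate H {z}) N C' ∧ (∀ s, s ≠ v → s ≠ u → C' s = C s) ∧ c ∈ C' v ∧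
      p ∈ C' v ∧ p ∈ C' u :=
  hk.exists_reinsertion hN le_rfl hk.adj_vx hk.adj_vy hk.adj_vu hk.adj_uw hc hcx hec hpx hpy hpw

lemma ne_of_not_isLight (hk : IsHubConfig N H v x y u w z C a b d e) {r : V}
    (hr : ¬IsLight H r) : r ≠ v ∧ r ≠ u :=
  ⟨fun hrv => hr (hrv ▸ Or.inr hk.isTiny), fun hru => hr (hru ▸ Or.inl hk.degree_eq_two)⟩

end IsHubConfig

namespace IsMinimalCounterexample

lemma exists_isHubConfig (hM : IsMinimalCounterexample N H) (hc : IsTinyConfig H v x y u w)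
    (hx : IsHub N H x) : ∃ z C a b d e, IsHubConfig N H v x y u w z C a b d e := by
  have hpos := hx.four_le_card_poorLinks hM.seven_le
  obtain ⟨z, hz⟩ := Finset.card_pos.1 (by omega : 0 < (poorLinks H x).card)
  rw [mem_poorLinks] at hz
  obtain ⟨C, h⟩ := hM.exists_isLabelling z (by have := hz.2.1; omega)
  have hvz := hc.ne_of_degree_eq_two hz.2.1
  have huz : u ≠ z := fun huz => hc.not_adj_u (huz ▸ hz.1.symm)
  have hwz : w ≠ z := fun hwz => hM.degree_ne_two_of_isTinyConfig hc (hwz ▸ hz.2.1)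
  obtain ⟨a, ha⟩ := h.exists_common (⟨hc.adj_x, hvz, fun hxz => hc.degree_ne_two (hxz ▸ hz.2.1)⟩ :
    (isolate H {z}).Adj v x)
  obtain ⟨b, hb⟩ := h.exists_common (⟨hc.symm.adj_x, hvz,
    fun hyz => hc.degree_ne_two' (hyz ▸ hz.2.1)⟩ : (isolate H {z}).Adj v y)
  obtain ⟨d, hd⟩ := h.exists_common (⟨hc.adj_u, hvz, huz⟩ : (isolate H {z}).Adj v u)
  obtain ⟨e, he⟩ := h.exists_common (⟨hc.adj_w, huz, hwz⟩ : (isolate H {z}).Adj u w)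
  exact ⟨z, C, a, b, d, e, hc, hx, hz, h, ha, hb, hd, he, hwz⟩

lemma isUsed_of_isHubConfig (hM : IsMinimalCounterexample N H)
    (hk : IsHubConfig N H v x y u w z C a b d e) {C' : V → Finset (Fin (3 * N))}
    (h' : IsLabelling (isolate H {z}) N C') {f : Fin (3 * N)} (hfx : f ∉ C' x)
    (hfr : ∀ r, H.Adj x r → ¬IsLight H r → f ∉ C' r) : IsUsed (isolate H {z}) C' v f :=
  hM.isUsed_of_isHub hk.isHub hk.adj_x.symm hk.isTiny hk.isPoorLink h' hfx hfr

/- By the previous lemma, each color outside the labels of `x` and of its two heavy neighbors is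
the color of `vy` or `vu`. As these three labels miss at least two colors, they miss both. -/
lemma eq_pair_of_isHubConfig (hM : IsMinimalCounterexample N H)
    (hk : IsHubConfig N H v x y u w z C a b d e) : (C x ∪ (heavyNbrs H x).biUnion C)ᶜ = {b, d} := by
  have hcard := hk.isLabelling.card_union_biUnion_add_card_le (t := x) (Q := heavyNbrs H x)
    fun s hs => by
      rw [mem_heavyNbrs] at hs
      rw [SimpleGraph.mem_neighborFinset]
      exact ⟨hs.1, hk.x_ne, fun hsz => hs.2 (Or.inl (hsz ▸ hk.isPoorLink.2.1))⟩
  refine Finset.eq_of_subset_of_card_le (fun f hf => ?_) ?_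
  · simp only [Finset.mem_compl, Finset.mem_union, Finset.mem_biUnion, not_or, not_exists,
      not_and] at hf
    obtain ⟨hfv, s, hvs, hfs⟩ := hM.isUsed_of_isHubConfig hk hk.isLabelling hf.1
      fun r hxr hr => hf.2 r (mem_heavyNbrs.2 ⟨hxr, hr⟩)
    rw [Finset.mem_insert, Finset.mem_singleton]
    obtain rfl | rfl | rfl := (hk.adj_iff s).1 hvs.1
    · exact absurd hfs hf.1
    · exact Or.inl (hk.isLabelling.eq_of_common hvs hfv hfs hk.color_y.1 hk.color_y.2)
    · exact Or.inr (hk.isLabelling.eq_of_common hvs hfv hfs hk.color_u.1 hk.color_u.2)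
  · rw [hk.isHub.card_heavyNbrs] at hcard
    have := Finset.card_le_two (a := b) (b := d)
    rw [Finset.card_compl, Fintype.card_fin]
    omega

lemma notMem_of_isHubConfig (hM : IsMinimalCounterexample N H)
    (hk : IsHubConfig N H v x y u w z C a b d e) {r : V} (hxr : H.Adj x r) (hr : ¬IsLight H r) :
    b ∉ C r ∧ d ∉ C r := by
  have hnot : ∀ f ∈ ({b, d} : Finset (Fin (3 * N))), f ∉ C r := fun f hf hfr => by
    rw [← hM.eq_pair_of_isHubConfig hk, Finset.mem_compl] at hf
    exact hf (Finset.mem_union_right _ (Finset.mem_biUnion.2 ⟨r, mem_heavyNbrs.2 ⟨hxr, hr⟩, hfr⟩))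
  exact ⟨hnot b (by simp), hnot d (by simp)⟩

lemma eq_of_notMem_of_isHubConfig (hM : IsMinimalCounterexample N H)
    (hk : IsHubConfig N H v x y u w z C a b d e) {p : Fin (3 * N)} (hpx : p ∉ C x) (hpy : p ∉ C y)
    (hpw : p ∉ C w) : p = d := by
  have hN := hM.seven_le
  obtain ⟨C', h', hC', -, hpv, hpu⟩ := hk.exists_reinsertion_isolate (by omega)
    (hk.isFree_y.mono (isolate_mono (isolate_le _ _) le_rfl)) hk.b_notMem_x hk.e_ne_b hpx hpy hpw
  have hCx := hC' x hk.adj_x.ne' hk.x_ne_u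
  have hCy := hC' y hk.symm.adj_x.ne' hk.symm.x_ne_u
  obtain ⟨hdv, s, hvs, hds⟩ := hM.isUsed_of_isHubConfig hk h' (hCx ▸ hk.d_notMem_x)
    fun r hxr hr => by
      rw [hC' r (hk.ne_of_not_isLight hr).1 (hk.ne_of_not_isLight hr).2]
      exact (hM.notMem_of_isHubConfig hk hxr hr).2
  obtain rfl | rfl | rfl := (hk.adj_iff s).1 hvs.1
  · exact absurd (hCx ▸ hds) hk.d_notMem_x
  · exact absurd (hCy ▸ hds) hk.d_notMem_y
  · exact h'.eq_of_common hvs hpv hpu hdv hds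

lemma eq_of_mem_inter_of_isHubConfig (hM : IsMinimalCounterexample N H)
    (hk : IsHubConfig N H v x y u w z C a b d e) {c c' : Fin (3 * N)}
    (hc : c ∈ C y ∩ (C x ∪ C w)) (hc' : c' ∈ C y ∩ (C x ∪ C w)) : c = c' := by
  have hsub : (C y ∪ (C x ∪ C w))ᶜ ⊆ {d} := fun p hp => by
    simp only [Finset.mem_compl, Finset.mem_union, not_or] at hp
    exact Finset.mem_singleton.2 (hM.eq_of_notMem_of_isHubConfig hk hp.2.1 hp.1 hp.2.2)
  have hcompl := Finset.card_le_card hsub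
  rw [Finset.card_compl, Fintype.card_fin, Finset.card_singleton] at hcompl
  have hinter := Finset.card_union_add_card_inter (C y) (C x ∪ C w)
  have hunion := Finset.card_union_le (C x) (C w)
  have := hM.seven_le
  simp only [hk.isLabelling.card_eq] at hinter hunion
  exact Finset.card_le_one.1 (by omega) c hc c' hc'

lemma mem_inter_of_isHubConfig (hM : IsMinimalCounterexample N H)
    (hk : IsHubConfig N H v x y u w z C a b d e) {c : Fin (3 * N)}
    (hc : IsFree (isolate H {z}) C y c) : c ∈ C y ∩ (C x ∪ C w) := by
  refine Finset.mem_inter.2 ⟨hc.1, by_contra fun hcxw => ?_⟩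
  rw [Finset.mem_union, not_or] at hcxw
  have hN := hM.seven_le
  obtain ⟨C', h', hC', hcv, -, -⟩ := hk.exists_reinsertion_isolate (by omega)
    (hc.mono ((isolate_le _ _).trans (isolate_le _ _))) hcxw.1
    (fun hec => hcxw.2 (hec ▸ hk.color_w.2)) hk.d_notMem_x hk.d_notMem_y hk.d_notMem_w
  have hCx := hC' x hk.adj_x.ne' hk.x_ne_u
  have hCy := hC' y hk.symm.adj_x.ne' hk.symm.x_ne_u
  have hbv := (hM.isUsed_of_isHubConfig hk h' (hCx ▸ hk.b_notMem_x) fun r hxr hr => by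
    rw [hC' r (hk.ne_of_not_isLight hr).1 (hk.ne_of_not_isLight hr).2]
    exact (hM.notMem_of_isHubConfig hk hxr hr).1).1
  obtain rfl := h'.eq_of_common hk.adj_vy hbv (hCy ▸ hk.color_y.2) hcv (hCy ▸ hc.1)
  exact hc.2 v hk.adj_vy.symm hk.color_y.1

lemma five_lt_degree_of_isHub (hM : IsMinimalCounterexample N H) (hc : IsTinyConfig H v x y u w)
    (hx : IsHub N H x) : 5 < H.degree y := by
  by_contra! hy
  have hN := hM.seven_le
  obtain ⟨z, C, a, b, d, e, hk⟩ := hM.exists_isHubConfig hc hx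
  have hdeg := degree_le_of_le (isolate_le H {z}) y
  obtain ⟨c, hcfree⟩ := hk.isLabelling.exists_isFree (v := y) (by omega)
  obtain ⟨c', hcfree', hne⟩ := hk.isLabelling.exists_isFree_notMem (v := y) (F := {c})
    (by rw [Finset.card_singleton]; omega)
  rw [Finset.mem_singleton] at hne
  exact hne (hM.eq_of_mem_inter_of_isHubConfig hk (hM.mem_inter_of_isHubConfig hk hcfree')
    (hM.mem_inter_of_isHubConfig hk hcfree))

end IsMinimalCounterexample

end HubConfig

section TwoHubs

variable {V : Type*} [Fintype V] {N : ℕ} {H K : SimpleGraph V} {C : V → Finset (Fin (3 * N))}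
  {v x y u w z z' : V} {a b d e g : Fin (3 * N)}

/-- A hub configuration whose second neighbor `y` is a hub as well, with a poor link `z'` of `y`
such that the color `g` of `yz'` is available for the edge `vu`. -/
structure IsTwoHubConfig (N : ℕ) (H : SimpleGraph V) (v x y u w z z' : V)
    (C : V → Finset (Fin (3 * N))) (a b d e g : Fin (3 * N)) : Prop
    extends IsHubConfig N H v x y u w z C a b d e where
  isHub' : IsHub N H y
  isPoorLink' : IsPoorLink H y z'
  not_adj : ¬H.Adj z z'
  link_ne : z' ≠ z
  color_z' : g ∈ C z' ∧ g ∈ C y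
  notMem_x : g ∉ C x
  notMem_w : g ∉ C w

namespace IsMinimalCounterexample

lemma exists_isTwoHubConfig (hM : IsMinimalCounterexample N H)
    (hk : IsHubConfig N H v x y u w z C a b d e) (hy : IsHub N H y) :
    ∃ z' g, IsTwoHubConfig N H v x y u w z z' C a b d e g := by
  have hcard : 1 < (poorLinks H y \ H.neighborFinset z).card := by
    have := Finset.le_card_sdiff (H.neighborFinset z) (poorLinks H y)
    have := hy.four_le_card_poorLinks hM.seven_le
    have := hk.isPoorLink.2.1
    rw [SimpleGraph.card_neighborFinset_eq_degree] at *
    omega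
  have hne : ∀ s, IsPoorLink H y s → s ≠ z := by
    rintro s hs rfl
    exact hy.not_isPoor hM.seven_le (hk.isPoorLink.isPoor_of_adj hs.1.symm hk.ne.symm)
  have hcolor : ∀ s ∈ poorLinks H y \ H.neighborFinset z, ∃ c, c ∈ C s ∧ c ∈ C y ∧
      (c ∉ C x ∪ C w → IsTwoHubConfig N H v x y u w z s C a b d e c) := fun s hs => by
    rw [Finset.mem_sdiff, mem_poorLinks, SimpleGraph.mem_neighborFinset] at hs
    obtain ⟨c, hcs, hcy⟩ := hk.isLabelling.exists_common
      (⟨hs.1.1.symm, hne s hs.1, hk.y_ne⟩ : (isolate H {z}).Adj s y)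
    refine ⟨c, hcs, hcy, fun hc => ?_⟩
    rw [Finset.mem_union, not_or] at hc
    exact ⟨hk, hy, hs.1, hs.2, hne s hs.1, ⟨hcs, hcy⟩, hc.1, hc.2⟩
  obtain ⟨s, hs, t, ht, hst⟩ := Finset.one_lt_card.1 hcard
  obtain ⟨c, hcs, hcy, hc⟩ := hcolor s hs
  obtain ⟨c', hcs', hcy', hc'⟩ := hcolor t ht
  by_contra! hno
  have hmem : c ∈ C x ∪ C w := by_contra fun h => hno s c (hc h)
  have hmem' : c' ∈ C x ∪ C w := by_contra fun h => hno t c' (hc' h)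
  obtain rfl := hM.eq_of_mem_inter_of_isHubConfig hk (Finset.mem_inter.2 ⟨hcy, hmem⟩)
    (Finset.mem_inter.2 ⟨hcy', hmem'⟩)
  rw [Finset.mem_sdiff, mem_poorLinks] at hs ht
  exact hk.isLabelling.notMem (⟨hs.1.1, hk.y_ne, hne s hs.1⟩ : (isolate H {z}).Adj y s)
    ⟨ht.1.1, hk.y_ne, hne t ht.1⟩ hst hcy hcs hcs'

end IsMinimalCounterexample

namespace IsTwoHubConfig

lemma adj_y (hk : IsTwoHubConfig N H v x y u w z z' C a b d e g) :
    (isolate H {z}).Adj y z' := ⟨hk.isPoorLink'.1, hk.y_ne, hk.link_ne⟩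

lemma v_ne' (hk : IsTwoHubConfig N H v x y u w z z' C a b d e g) : v ≠ z' :=
  hk.ne_of_degree_eq_two hk.isPoorLink'.2.1

lemma x_ne' (hk : IsTwoHubConfig N H v x y u w z z' C a b d e g) : x ≠ z' := fun hxz =>
  hk.degree_ne_two (hxz ▸ hk.isPoorLink'.2.1)

lemma y_ne' (hk : IsTwoHubConfig N H v x y u w z z' C a b d e g) : y ≠ z' := fun hyz =>
  hk.degree_ne_two' (hyz ▸ hk.isPoorLink'.2.1)

lemma u_ne' (hk : IsTwoHubConfig N H v x y u w z z' C a b d e g) : u ≠ z' := fun huz =>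
  hk.toIsTinyConfig.symm.not_adj_u (huz ▸ hk.isPoorLink'.1.symm)

/- Reinserting `v` and `u` with the color `g` on the edge `vy` takes `b` off this edge. -/
lemma exists_isFree (hk : IsTwoHubConfig N H v x y u w z z' C a b d e g) (hN : 3 ≤ N)
    (hw : w ≠ z') :
    ∃ C', IsLabelling (isolate (isolate H {z}) {z'}) N C' ∧
      (∀ s, s ≠ v → s ≠ u → C' s = C s) ∧ IsFree (isolate (isolate H {z}) {z'}) C' y b ∧
      b ∉ C' v := by
  obtain ⟨C', h', hC', hgv, -, -⟩ := hk.exists_reinsertion hN (isolate_le (isolate H {z}) {z'})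
    ⟨hk.adj_vx, hk.v_ne', hk.x_ne'⟩ ⟨hk.adj_vy, hk.v_ne', hk.y_ne'⟩ ⟨hk.adj_vu, hk.v_ne', hk.u_ne'⟩
    ⟨hk.adj_uw, hk.u_ne', hw⟩
    ((hk.isLabelling.isFree_isolate hk.adj_y hk.color_z'.2 hk.color_z'.1).mono
      ((isolate_le _ _).trans (isolate_le _ _))) hk.notMem_x
    (fun heg => hk.notMem_w (heg ▸ hk.color_w.2)) hk.d_notMem_x hk.d_notMem_y hk.d_notMem_w
  have hCy := hC' y hk.symm.adj_x.ne' hk.symm.x_ne_u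
  have hbv : b ∉ C' v := fun hbv => by
    obtain rfl := h'.eq_of_common ⟨hk.adj_vy, hk.v_ne', hk.y_ne'⟩ hbv (hCy ▸ hk.color_y.2) hgv
      (hCy ▸ hk.color_z'.2)
    exact hk.isLabelling.notMem hk.adj_vy.symm hk.adj_y hk.v_ne' hk.color_y.2 hk.color_y.1
      hk.color_z'.1
  refine ⟨C', h', hC', ⟨hCy ▸ hk.color_y.2, fun s hys => ?_⟩, hbv⟩
  obtain rfl | hsv := eq_or_ne s v
  · exact hbv
  · rw [hC' s hsv fun hsu => hk.symm.not_adj_u (hsu ▸ hys.1.1.symm)]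
    exact hk.isLabelling.notMem hk.adj_vy.symm hys.1 hsv.symm hk.color_y.2 hk.color_y.1

end IsTwoHubConfig

namespace IsMinimalCounterexample

lemma ne_of_isTinyConfig (hM : IsMinimalCounterexample N H) (hc : IsTinyConfig H v x y u w)
    {s : V} (hs : H.degree s = 2) : w ≠ s := fun hws =>
  hM.degree_ne_two_of_isTinyConfig hc (hws ▸ hs)

/- Otherwise `z'` could be reinserted with the color `b` on the edge `yz'` after `b` was taken off
the edge `vy`, which leaves `b` unused at `v`. -/
lemma exists_color_of_isTwoHubConfig (hM : IsMinimalCounterexample N H)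
    (hk : IsTwoHubConfig N H v x y u w z z' C a b d e g) {v' : V} (hzv : H.Adj z' v')
    (hvy : v' ≠ y) :
    ∃ x', H.Adj v' x' ∧ H.degree x' ≠ 2 ∧ b ∈ C v' ∧ b ∈ C x' := by
  have hN := hM.seven_le
  have hv' := hk.isPoorLink'.isPoor_of_adj hzv hvy
  have hvv : v ≠ v' := fun h => hk.toIsTinyConfig.not_isPoor (h ▸ hv')
  have hvu : v' ≠ u := fun h =>
    hk.not_isPoor_two (hM.degree_ne_two_of_isTinyConfig hk.toIsTinyConfig) (h ▸ hv')
  have hvx : x ≠ v' := fun h => hk.isHub.not_isPoor hN (h ▸ hv')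
  have hvz : v' ≠ z := fun h => hk.not_adj (h ▸ hzv.symm)
  obtain ⟨C', h', hC', hfree, hbv⟩ := hk.exists_isFree (by omega)
    (hM.ne_of_isTinyConfig hk.toIsTinyConfig hk.isPoorLink'.2.1)
  have hzv' : (isolate H {z}).Adj z' v' := ⟨hzv, hk.link_ne, hvz⟩
  by_contra! hno
  obtain ⟨C'', h'', -, hC'', hbz⟩ := hM.exists_insertion_of_isPoor (isolate_le H {z}) h' hv'
    hk.isPoorLink'.2.1 hzv' hk.adj_y.symm hvy hfree fun r hvr hbv' hbr => by
      by_contra hr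
      rw [hC' v' hvv.symm hvu] at hbv'
      rw [hC' r ?_ fun h => hr (h ▸ hk.degree_eq_two)] at hbr
      · exact hno r hvr.1 hr hbv' hbr
      · rintro rfl
        obtain h | h | h := (hk.adj_iff v').1 hvr.1.symm
        exacts [hvx h.symm, hvy h, hvu h]
  have hC : ∀ s, s ≠ v' → H.degree s ≠ 2 → C'' s = C' s := fun s hs hs2 =>
    by_contra fun h => hs2 (hC'' s hs h).2
  have hCx := (hC x hvx hk.degree_ne_two).trans (hC' x hk.adj_x.ne' hk.x_ne_u)
  have hCy := (hC y hvy.symm hk.degree_ne_two').trans (hC' y hk.symm.adj_x.ne' hk.symm.x_ne_u)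
  refine hbv (hC v hvv (fun h => hk.ne_of_degree_eq_two h rfl) ▸
    (hM.isUsed_of_isHubConfig hk.toIsHubConfig h'' (hCx ▸ hk.b_notMem_x) fun r hxr hr => ?_).1)
  obtain rfl | hrv := eq_or_ne r v'
  · exact h''.notMem hk.adj_y.symm hzv' hvy.symm hbz (hCy ▸ hk.color_y.2)
  · rw [hC r hrv fun h => hr (Or.inl h), hC' r (hk.ne_of_not_isLight hr).1
      (hk.ne_of_not_isLight hr).2]
    exact (hM.notMem_of_isHubConfig hk.toIsHubConfig hxr hr).1

end IsMinimalCounterexample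

end TwoHubs

section HubPair

variable {V : Type*} [Fintype V] {N : ℕ} {H : SimpleGraph V} {C : V → Finset (Fin (3 * N))}
  {v x y u w z z' : V} {a b d e g : Fin (3 * N)}

namespace IsMinimalCounterexample

/- The color `d` of the edge `vu` becomes available at the hub `x` once `u` is removed. -/
lemma exists_swap_of_isHubConfig (hM : IsMinimalCounterexample N H)
    (hk : IsHubConfig N H v x y u w z C a b d e) :
    ∃ C', IsLabelling (isolate H {u}) N C' ∧
      SameEdgeColors (trim H (isolate (isolate H {u}) {z}) {s | IsPoor H s}) C C' ∧
      C' x ⊆ insert d (C x) ∧ ∀ s, s ≠ x → ¬IsLight H s → ¬IsPoor H s → C' s = C s := by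
  have hle : isolate (isolate H {u}) {z} ≤ isolate H {z} := isolate_mono (isolate_le _ _) le_rfl
  obtain ⟨q, hq⟩ := hk.isLabelling.exists_isFree
    ((degree_isolate_lt hk.isPoorLink.1.symm).trans_eq hk.isHub.degree_eq)
  have hdv : ¬IsUsed (isolate (isolate H {u}) {z}) C v d := by
    rintro ⟨-, r, hvr, hdr⟩
    obtain rfl | rfl | rfl := (hk.adj_iff r).1 hvr.1.1
    exacts [hk.d_notMem_x hdr, hk.d_notMem_y hdr, hvr.1.2.2 rfl]
  obtain ⟨C', h', hs, hx, hC'⟩ := hM.exists_swap_of_isHub hk.toIsTinyConfig hk.isHub hk.isPoorLink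
    (hk.isLabelling.mono hle) (hq.mono hle) hk.d_notMem_x
    (fun r hxr hr => (hM.notMem_of_isHubConfig hk hxr hr).2) hdv
    fun s r hzs hsx hsr _ _ hds hdr => by
      by_contra hr
      have hps := hk.isPoorLink.isPoor_of_adj hzs hsx
      obtain ⟨hqs, x', hsx', hx', hqx'⟩ := hM.exists_degree_ne_two_of_isFree hk.isLabelling hps
        hk.isPoorLink.2.1 hzs hk.isPoorLink.1.symm hsx hq
      obtain rfl := hps.eq_of_adj hsx' hsr hx' hr
      obtain rfl := hk.isLabelling.eq_of_common
        (⟨hsr, hzs.ne', fun h => hr (h ▸ hk.isPoorLink.2.1)⟩ : (isolate H {z}).Adj s x')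
        hds hdr hqs hqx'
      exact hk.d_notMem_x hq.1
  exact ⟨C', h', hs, hx ▸ Finset.insert_subset_insert _ (Finset.erase_subset _ _), hC'⟩

/- The swap at `x` keeps every color that a later swap at `y` depends on. -/
lemma exists_isLabelling_of_isTwoHubConfig (hM : IsMinimalCounterexample N H)
    (hk : IsTwoHubConfig N H v x y u w z z' C a b d e g) :
    ∃ C', IsLabelling (isolate H {u}) N C' ∧ (a ∈ C' v ∧ a ∈ C' x) ∧ (b ∈ C' v ∧ b ∈ C' y) ∧
      (g ∈ C' z' ∧ g ∈ C' y) ∧ g ∉ C' x ∧ g ∉ C' w ∧ IsFree (isolate H {u}) C' w e ∧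
      ∀ v', H.Adj z' v' → v' ≠ y → ∃ x', H.Adj v' x' ∧ H.degree x' ≠ 2 ∧ b ∈ C' v' ∧ b ∈ C' x' := by
  have hN := hM.seven_le
  have hc := hk.toIsTinyConfig
  have hw2 := hM.degree_ne_two_of_isTinyConfig hc
  have hpw := hM.not_isPoor_of_isTinyConfig hc
  have hpv := hc.not_isPoor
  have hpx := hk.isHub.not_isPoor hN
  have hpy := hk.isHub'.not_isPoor hN
  obtain ⟨C', h', hs, hx, hC'⟩ := hM.exists_swap_of_isHubConfig hk.toIsHubConfig
  have hw := hC' w hc.ne_x (hM.not_isLight_of_isTinyConfig hc) hpw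
  refine ⟨C', h', (hs ⟨⟨⟨hc.adj_x, hc.adj_u.ne, hc.x_ne_u⟩, hk.v_ne, hk.x_ne⟩,
      fun h => (hpv h).elim, fun h => (hpx h).elim⟩ a).1 hk.color_x,
    (hs ⟨⟨⟨hc.symm.adj_x, hc.adj_u.ne, hc.symm.x_ne_u⟩, hk.v_ne, hk.y_ne⟩,
      fun h => (hpv h).elim, fun h => (hpy h).elim⟩ b).1 hk.color_y,
    (hs ⟨⟨⟨hk.isPoorLink'.1.symm, hk.u_ne'.symm, hc.symm.x_ne_u⟩, hk.link_ne, hk.y_ne⟩,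
      fun _ => hc.degree_ne_two', fun h => (hpy h).elim⟩ g).1 hk.color_z',
    fun hg => (Finset.mem_insert.1 (hx hg)).elim (fun hgd => hk.d_notMem_y (hgd ▸ hk.color_z'.2))
      hk.notMem_x, hw ▸ hk.notMem_w,
    hk.isPoorLink.isFree_of_sameEdgeColors (isolate_le H {u}) hc.ne_x hpw hw2 hs hw
      (hk.isFree_w.mono fun _ _ h => ⟨⟨h.1.1, h.2⟩, h.1.2⟩), fun v' hzv hvy => ?_⟩
  obtain ⟨x', hvx', hx', hbv, hbx⟩ := hM.exists_color_of_isTwoHubConfig hk hzv hvy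
  refine ⟨x', hvx', hx', (hs ⟨⟨⟨hvx', ?_, fun h => hx' (h ▸ hc.degree_eq_two)⟩,
    fun h => hk.not_adj (h ▸ hzv.symm), fun h => hx' (h ▸ hk.isPoorLink.2.1)⟩,
    fun _ => hx', fun hpx' hv' => ?_⟩ b).1 ⟨hbv, hbx⟩⟩
  · rintro rfl
    exact hc.not_isPoor_two hw2 (hk.isPoorLink'.isPoor_of_adj hzv hvy)
  · have hz' := hM.degree_eq_of_isPoorLink
      ⟨hzv, hv', x', fun h => hx' (h ▸ hk.isPoorLink'.2.1), hvx', hpx'⟩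
    have := hk.isPoorLink'.2.1
    omega

lemma exists_notMem_of_isHub (hM : IsMinimalCounterexample N H) (hc : IsTinyConfig H v x y u w)
    (hy : IsHub N H y) (h : IsLabelling (isolate H {u}) N C) (ha : a ∈ C v ∧ a ∈ C x) :
    ∃ f, f ∉ C y ∧ (∀ r, H.Adj y r → ¬IsLight H r → f ∉ C r) ∧
      ¬IsUsed (isolate H {u}) C v f := by
  have hQ : heavyNbrs H y ⊆ (isolate H {u}).neighborFinset y := fun r hr => by
    rw [mem_heavyNbrs] at hr
    refine (SimpleGraph.mem_neighborFinset _ _ _).2 ⟨hr.1, hc.symm.x_ne_u, ?_⟩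
    rintro rfl
    exact hc.symm.not_adj_u hr.1.symm
  obtain ⟨f, hfa, hfy, hfr⟩ := h.exists_notMem_of_card_le_two hQ hy.card_heavyNbrs.le
    (le_trans (by norm_num) hM.seven_le) a
  refine ⟨f, hfy, fun r hyr hr => hfr r (mem_heavyNbrs.2 ⟨hyr, hr⟩), ?_⟩
  rintro ⟨hfv, r, hvr, hfr'⟩
  obtain rfl | rfl | rfl := (hc.adj_iff r).1 hvr.1
  exacts [hfa (h.eq_of_common hvr hfv hfr' ha.1 ha.2), hfy hfr', hvr.2.2 rfl]

lemma exists_isLabelling_notMem_of_isTwoHubConfig (hM : IsMinimalCounterexample N H)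
    (hk : IsTwoHubConfig N H v x y u w z z' C a b d e g) :
    ∃ C', IsLabelling (isolate H {u}) N C' ∧ (a ∈ C' v ∧ a ∈ C' x) ∧ (b ∈ C' v ∧ b ∈ C' y) ∧
      g ∉ C' x ∧ g ∉ C' y ∧ g ∉ C' w ∧ IsFree (isolate H {u}) C' w e := by
  have hN := hM.seven_le
  have hc := hk.toIsTinyConfig
  have hw2 := hM.degree_ne_two_of_isTinyConfig hc
  have hpw := hM.not_isPoor_of_isTinyConfig hc
  have hpv := hc.not_isPoor
  have hpx := hk.isHub.not_isPoor hN
  obtain ⟨C₁, h₁, ha, hb, hg, hgx, hgw, he, hlink⟩ := hM.exists_isLabelling_of_isTwoHubConfig hk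
  obtain ⟨f, hfy, hfr, hfv⟩ := hM.exists_notMem_of_isHub hc hk.isHub' h₁ ha
  have hle : isolate (isolate H {u}) {z'} ≤ isolate H {u} := isolate_le _ _
  have hgfree := h₁.isFree_isolate
    (⟨hk.isPoorLink'.1, hc.symm.x_ne_u, hk.u_ne'.symm⟩ : (isolate H {u}).Adj y z') hg.2 hg.1
  obtain ⟨C', h', hs, hy, hC'⟩ := hM.exists_swap_of_isHub hc.symm hk.isHub' hk.isPoorLink'
    (h₁.mono hle) hgfree hfy hfr (fun h => hfv (h.mono hle))
    fun s r hzs hsy hsr hsu hru hfs hfr' => by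
      by_contra hr
      obtain ⟨x', hsx', hx', hbs, hbx'⟩ := hlink s hzs hsy
      obtain rfl := (hk.isPoorLink'.isPoor_of_adj hzs hsy).eq_of_adj hsx' hsr hx' hr
      exact hfy (h₁.eq_of_common (⟨hsr, hsu, hru⟩ : (isolate H {u}).Adj s x') hfs hfr' hbs hbx' ▸
        hb.2)
  have hx := hC' x hc.ne (hk.isHub.not_isLight hN) hpx
  have hw := hC' w hc.ne_y (hM.not_isLight_of_isTinyConfig hc) hpw
  refine ⟨C', h', (hs ⟨⟨⟨hc.adj_x, hc.adj_u.ne, hc.x_ne_u⟩, hk.v_ne', hk.x_ne'⟩,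
      fun h => (hpv h).elim, fun h => (hpx h).elim⟩ a).1 ha,
    (hs ⟨⟨⟨hc.symm.adj_x, hc.adj_u.ne, hc.symm.x_ne_u⟩, hk.v_ne', hk.y_ne'⟩,
      fun h => (hpv h).elim, fun h => (hk.isHub'.not_isPoor hN h).elim⟩ b).1 hb,
    hx ▸ hgx, ?_, hw ▸ hgw,
    hk.isPoorLink'.isFree_of_sameEdgeColors (isolate_le H {u}) hc.ne_y hpw hw2 hs hw (he.mono hle)⟩
  rw [hy, Finset.mem_insert, not_or]
  exact ⟨fun h => hfy (h ▸ hg.2), Finset.notMem_erase g _⟩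

lemma not_isHub_of_isHub (hM : IsMinimalCounterexample N H) (hc : IsTinyConfig H v x y u w)
    (hx : IsHub N H x) : ¬IsHub N H y := fun hy => by
  obtain ⟨z, C, a, b, d, e, hk⟩ := hM.exists_isHubConfig hc hx
  obtain ⟨z', g, hk'⟩ := hM.exists_isTwoHubConfig hk hy
  obtain ⟨C', h, ha, hb, hgx, hgy, hgw, he⟩ :=
    hM.exists_isLabelling_notMem_of_isTwoHubConfig hk'
  have hvx : (isolate H {u}).Adj v x := ⟨hc.adj_x, hc.adj_u.ne, hc.x_ne_u⟩
  have hvy : (isolate H {u}).Adj v y := ⟨hc.symm.adj_x, hc.adj_u.ne, hc.symm.x_ne_u⟩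
  exact hM.false_of_isTinyConfig hc (h.mono (isolate_le _ _))
    (h.isFree_isolate hvx.symm ha.2 ha.1) (h.notMem hvx hvy hc.ne ha.1 ha.2)
    (h.isFree_isolate hvy.symm hb.2 hb.1) (h.notMem hvy hvx hc.ne.symm hb.1 hb.2)
    hgx hgy hgw (he.mono (isolate_le _ _)) hk.e_ne_a hk.e_ne_b

lemma exists_isRich (hM : IsMinimalCounterexample N H) (hv : IsTiny H v) :
    ∃ x, H.Adj v x ∧ IsRich H x := by
  obtain ⟨x, y, u, w, hc⟩ := hM.exists_isTinyConfig hv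
  have hdeg : ∀ {x y}, IsTinyConfig H v x y u w → 3 ≤ H.degree x := fun hc => by
    have := hM.two_le_degree hc.adj_x.symm
    have := hc.degree_ne_two
    omega
  by_contra! hno
  obtain hx | hx := hM.isSmall_or_isHub hc.adj_x.symm hv (hdeg hc) (hno x hc.adj_x) <;>
    obtain hy | hy :=
      hM.isSmall_or_isHub hc.symm.adj_x.symm hv (hdeg hc.symm) (hno y hc.symm.adj_x)
  · exact hM.not_isSmall_of_isSmall hc hx hy
  · exact absurd hx.degree_le (hM.five_lt_degree_of_isHub hc.symm hy).not_ge
  · exact absurd hy.degree_le (hM.five_lt_degree_of_isHub hc hx).not_ge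
  · exact hM.not_isHub_of_isHub hc hx hy

end IsMinimalCounterexample

end HubPair

section Discharging

variable {V : Type*} [Fintype V] {N : ℕ} {H : SimpleGraph V} {v x : V}

/-- The charge sent from `x` to `z` in the discharging argument, where every vertex starts with
twice its degree. -/
noncomputable def transfer (H : SimpleGraph V) (x z : V) : ℕ :=
  (if H.Adj x z ∧ H.degree z = 2 ∧ ¬IsPoor H x then 1 else 0) +
    (if IsPoorLink H x z then 1 else 0) + if H.Adj x z ∧ IsTiny H z ∧ IsRich H x then 1 else 0

lemma sum_transfer (x : V) : ∑ z, transfer H x z =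
    (if IsPoor H x then 0 else (twoNbrs H x).card) + (poorLinks H x).card +
      if IsRich H x then (tinyNbrs H x).card else 0 := by
  have htwo : twoNbrs H x = ({z | H.Adj x z ∧ H.degree z = 2} : Finset V) := by
    ext; simp [mem_twoNbrs]
  have hlinks : poorLinks H x = ({z | IsPoorLink H x z} : Finset V) := by ext; simp [mem_poorLinks]
  have htiny : tinyNbrs H x = ({z | H.Adj x z ∧ IsTiny H z} : Finset V) := by
    ext; simp [mem_tinyNbrs]
  simp only [transfer, Finset.sum_add_distrib, Finset.sum_boole, Nat.cast_id, ← hlinks]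
  by_cases hpoor : IsPoor H x <;> by_cases hrich : IsRich H x <;>
    simp [hpoor, hrich, htwo, htiny]

lemma transfer_eq_zero_of_not_adj {z : V} (hxz : ¬H.Adj x z) : transfer H x z = 0 := by
  simp [transfer, IsPoorLink, hxz]

lemma IsRich.one_le_sum_transfer (hx : IsRich H x) (hxv : H.Adj x v) (hv : IsTiny H v) :
    1 ≤ ∑ y, transfer H y v :=
  le_trans (by simp [transfer, hx, hxv, hv])
    (Finset.single_le_sum (fun y _ => Nat.zero_le (transfer H y v)) (Finset.mem_univ x))

namespace IsMinimalCounterexample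

lemma card_poorLinks_eq_zero (hM : IsMinimalCounterexample N H) (hx : H.degree x ≤ 6) :
    (poorLinks H x).card = 0 :=
  (hM.card_poorLinks_eq_zero_or x).resolve_right fun h => by
    have := hM.seven_le
    omega

lemma two_le_sum_transfer (hM : IsMinimalCounterexample N H) (hv : H.degree v = 2) :
    2 ≤ ∑ x, transfer H x v := by
  obtain ⟨s, hvs, -⟩ := exists_adj_ne_of_degree_eq_two hv v
  obtain ⟨t, hvt, hts⟩ := exists_adj_ne_of_degree_eq_two hv s
  have hlink : ∀ {p q}, H.Adj v p → H.Adj v q → p ≠ q → IsPoor H p → 2 ≤ transfer H q v := by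
    intro p q hp hq hpq hpoor
    have hq' : IsPoorLink H q v := ⟨hq.symm, hv, p, hpq, hp, hpoor⟩
    simp [transfer, hq', hq.symm, hv, hM.not_isPoor_of_isPoorLink hq']
  calc 2 ≤ transfer H s v + transfer H t v := by
        by_cases hs : IsPoor H s
        · exact (hlink hvs hvt hts.symm hs).trans le_add_self
        by_cases ht : IsPoor H t
        · exact (hlink hvt hvs hts ht).trans le_self_add
        · have hone : ∀ {p}, H.Adj v p → ¬IsPoor H p → 1 ≤ transfer H p v := fun hp hpoor => by
            simp [transfer, hp.symm, hv, hpoor, add_assoc]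
          exact add_le_add (hone hvs hs) (hone hvt ht)
    _ = ∑ x ∈ {s, t}, transfer H x v := by rw [Finset.sum_pair hts.symm]
    _ ≤ ∑ x, transfer H x v := Finset.sum_le_sum_of_subset (Finset.subset_univ _)

lemma six_add_sum_transfer_le (hM : IsMinimalCounterexample N H) (hv : 0 < H.degree v) :
    6 + ∑ z, transfer H v z ≤ 2 * H.degree v + ∑ x, transfer H x v := by
  obtain ⟨s, hvs⟩ := (SimpleGraph.degree_pos_iff_exists_adj _ _).1 hv
  have hdeg := hM.two_le_degree hvs
  have hsum := card_heavyNbrs_add_card_tinyNbrs_add_card_twoNbrs (H := H) v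
  rw [sum_transfer]
  by_cases hpoor : IsPoor H v
  · have hlinks := hM.card_poorLinks_eq_zero (hpoor.degree_le.trans (by norm_num))
    have hrich : ¬IsRich H v := fun h => h.not_isPoor hpoor
    simp only [hpoor, hrich, hlinks, if_true, if_false]
    obtain hv2 | hv2 := hdeg.eq_or_lt
    · have := hM.two_le_sum_transfer hv2.symm
      omega
    · omega
  rw [if_neg hpoor]
  by_cases hrich : IsRich H v
  · have := hrich.card_le
    rw [if_pos hrich]
    omega
  rw [if_neg hrich]
  obtain hv4 | hv4 := le_or_gt 4 (H.degree v)
  · have := hM.card_twoNbrs_add_card_poorLinks_le hv4 hpoor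
    omega
  · have hlinks := hM.card_poorLinks_eq_zero (x := v) (by omega)
    rw [IsPoor] at hpoor
    obtain hv2 | hv2 := hdeg.eq_or_lt
    · have := hM.two_le_sum_transfer hv2.symm
      omega
    by_cases htiny : IsTiny H v
    · obtain ⟨x, hvx, hx⟩ := hM.exists_isRich htiny
      have := hx.one_le_sum_transfer hvx.symm htiny
      have := htiny.2
      omega
    · rw [IsTiny] at htiny
      omega

lemma three_mul_card_le_sum_degree (hM : IsMinimalCounterexample N H) :
    3 * ({v | 0 < H.degree v} : Finset V).card ≤ ∑ v, H.degree v := by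
  have hv : ∀ v, (if 0 < H.degree v then 6 else 0) + ∑ z, transfer H v z ≤
      2 * H.degree v + ∑ x, transfer H x v := fun v => by
    split_ifs with hv
    · exact hM.six_add_sum_transfer_le hv
    · rw [Finset.sum_eq_zero fun z _ => transfer_eq_zero_of_not_adj fun hvz =>
        hv ((SimpleGraph.degree_pos_iff_exists_adj _ _).2 ⟨z, hvz⟩)]
      exact Nat.zero_le _
  have hsum := Finset.sum_le_sum fun v (_ : v ∈ Finset.univ) => hv v
  rw [Finset.sum_add_distrib, Finset.sum_add_distrib,
    Finset.sum_comm (f := fun v x => transfer H x v), ← Finset.mul_sum, ← Finset.sum_filter,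
    Finset.sum_const, smul_eq_mul] at hsum
  omega

end IsMinimalCounterexample

end Discharging

section StrongColoring

variable {V : Type*} {N : ℕ} {G : SimpleGraph V}

lemma Conflict.exists_adj {e f : Sym2 V} (he : e ∈ G.edgeSet) (hf : f ∈ G.edgeSet)
    (hef : Conflict G e f) :
    ∃ v x y, G.Adj v x ∧ G.Adj v y ∧ x ≠ y ∧ s(v, x) = e ∧ y ∈ f := by
  have hshare : ∀ v ∈ e, v ∈ f → ∃ v x y, G.Adj v x ∧ G.Adj v y ∧ x ≠ y ∧ s(v, x) = e ∧ y ∈ f := by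
    intro v hve hvf
    obtain ⟨x, rfl⟩ := Sym2.mem_iff_exists.1 hve
    obtain ⟨y, rfl⟩ := Sym2.mem_iff_exists.1 hvf
    exact ⟨v, x, y, he, hf, fun hxy => hef.1 (by rw [hxy]), rfl, Sym2.mem_mk_right v y⟩
  obtain ⟨v, hve, hvf⟩ | ⟨g, hg, ⟨v, hve, hvg⟩, y, hyf, hyg⟩ := hef.2
  · exact hshare v hve hvf
  by_cases hye : y ∈ e
  · exact hshare y hye hyf
  have hvy : v ≠ y := fun hvy => hye (hvy ▸ hve)
  obtain rfl := (Sym2.mem_and_mem_iff hvy).1 ⟨hvg, hyg⟩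
  obtain ⟨x, rfl⟩ := Sym2.mem_iff_exists.1 hve
  exact ⟨v, x, y, he, hg, fun hxy => hye (hxy ▸ Sym2.mem_mk_right v x), rfl, hyf⟩

lemma IsLabelling.hasStrongColoring {k : ℕ} {C : V → Finset (Fin k)} (h : IsLabelling G N C)
    (hk : 0 < k) : HasStrongColoring G k := by
  have hcolor : ∀ e : Sym2 V, ∃ c : Fin k, e ∈ G.edgeSet → ∀ v ∈ e, c ∈ C v := fun e => by
    by_cases he : e ∈ G.edgeSet
    · induction e with
      | _ x y =>
        obtain ⟨c, hx, hy⟩ := h.exists_common he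
        exact ⟨c, fun _ v hv => by obtain rfl | rfl := Sym2.mem_iff.1 hv <;> assumption⟩
    · exact ⟨⟨0, hk⟩, fun h => absurd h he⟩
  choose color hcolor using hcolor
  refine ⟨color, fun e he f hf hef heq => ?_⟩
  obtain ⟨v, x, y, hvx, hvy, hxy, rfl, hyf⟩ := hef.exists_adj he hf
  exact h.notMem hvx hvy hxy (hcolor _ he v (Sym2.mem_mk_left v x))
    (hcolor _ he x (Sym2.mem_mk_right v x)) (heq ▸ hcolor f hf y hyf)

lemma two_mul_ncard_lt_of_mad_lt [Finite V] {m : ℕ} (hmad : mad G < m) {A : Finset V}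
    (hA : A.Nonempty) : 2 * {e ∈ G.edgeSet | ∀ v ∈ e, v ∈ A}.ncard < m * A.card := by
  have hbdd : BddAbove {r : ℝ | ∃ A : Finset V, A.Nonempty ∧
      r = 2 * ({e ∈ G.edgeSet | ∀ v ∈ e, v ∈ A}.ncard : ℝ) / (A.card : ℝ)} := by
    refine ((Set.finite_range fun A : Finset V =>
      2 * ({e ∈ G.edgeSet | ∀ v ∈ e, v ∈ A}.ncard : ℝ) / (A.card : ℝ)).subset ?_).bddAbove
    rintro r ⟨A, -, rfl⟩
    exact ⟨A, rfl⟩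
  have hlt := (le_csSup hbdd ⟨A, hA, rfl⟩).trans_lt hmad
  rw [div_lt_iff₀ (Nat.cast_pos.2 hA.card_pos)] at hlt
  exact_mod_cast hlt

end StrongColoring

section Existence

variable {V : Type*} [Fintype V] {N : ℕ} {G H : SimpleGraph V}

lemma exists_isMinimalCounterexample (hN : 7 ≤ N) (hdeg : ∀ v, G.degree v ≤ N)
    (hG : ∀ C : V → Finset (Fin (3 * N)), ¬IsLabelling G N C) :
    ∃ H ≤ G, IsMinimalCounterexample N H := by
  obtain ⟨H, ⟨hHG, hH⟩, hmin⟩ := (wellFounded_lt (α := SimpleGraph V)).has_min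
    {H | H ≤ G ∧ ∀ C : V → Finset (Fin (3 * N)), ¬IsLabelling H N C} ⟨G, le_rfl, hG⟩
  refine ⟨H, hHG, hN, fun v => (degree_le_of_le hHG v).trans (hdeg v), hH, fun u hu => ?_⟩
  obtain ⟨v, huv⟩ := (SimpleGraph.degree_pos_iff_exists_adj _ _).1 hu
  by_contra! hC
  exact hmin (isolate H {u}) ⟨(isolate_le H {u}).trans hHG, hC⟩
    ((isolate_le H {u}).lt_of_not_ge fun hle => (hle huv).2.1 rfl)

lemma sum_degree_lt_of_mad_lt {m : ℕ} (hmad : mad G < m) (hHG : H ≤ G) (hH : H ≠ ⊥) :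
    ∑ v, H.degree v < m * ({v | 0 < H.degree v} : Finset V).card := by
  obtain ⟨v, w, hvw⟩ := SimpleGraph.ne_bot_iff_exists_adj.1 hH
  have hpos : ∀ {v w}, H.Adj v w → v ∈ ({v | 0 < H.degree v} : Finset V) := fun hvw =>
    Finset.mem_filter_univ _ |>.2 ((SimpleGraph.degree_pos_iff_exists_adj _ _).2 ⟨_, hvw⟩)
  refine lt_of_le_of_lt ?_ (two_mul_ncard_lt_of_mad_lt hmad ⟨v, hpos hvw⟩)
  rw [SimpleGraph.sum_degrees_eq_twice_card_edges, ← Set.ncard_coe_finset,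
    SimpleGraph.coe_edgeFinset]
  refine Nat.mul_le_mul_left 2 (Set.ncard_le_ncard (fun e he => ?_) (Set.toFinite _))
  refine ⟨SimpleGraph.edgeSet_mono hHG he, ?_⟩
  induction e with
  | _ x y =>
    intro s hs
    obtain rfl | rfl := Sym2.mem_iff.1 hs
    exacts [hpos he, hpos he.symm]

lemma IsMinimalCounterexample.ne_bot (hM : IsMinimalCounterexample N H) : H ≠ ⊥ := by
  rintro rfl
  obtain ⟨T, -, hT⟩ := Finset.exists_subset_card_eq
    (s := (Finset.univ : Finset (Fin (3 * N)))) (n := N) (by simp; omega)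
  exact hM.not_isLabelling (fun _ => T) ⟨fun _ => hT, fun _ _ h => h.elim, fun _ _ _ h => h.elim⟩

end Existence

/-- If `Δ ≥ 7` and `G` has maximum average degree less than `3` and maximum degree at
most `Δ`, then `χ'_s(G) ≤ 3Δ`. -/
theorem strong_chromatic_index_mad_lt_three {V : Type*} [Fintype V] (Δ : ℕ)
    (hΔ : 7 ≤ Δ) (G : SimpleGraph V) (hmad : mad G < 3) (hdeg : G.maxDegree ≤ Δ) :
    strongChromaticIndex G ≤ 3 * Δ := by
  apply Nat.sInf_le
  by_contra hcol
  obtain ⟨H, hHG, hM⟩ := exists_isMinimalCounterexample hΔ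
    (fun v => (G.degree_le_maxDegree v).trans hdeg)
    fun C hC => hcol (hC.hasStrongColoring (by omega))
  exact (sum_degree_lt_of_mad_lt (m := 3) (mod_cast hmad) hHG hM.ne_bot).not_ge
    hM.three_mul_card_le_sum_degree

end StrongEC
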